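/- Let p ≥ 2 be an integer and η > 0. Let (c_k)_{k≥1} be complex numbers, (φ_k)_{k≥1} real numbers, and γ_k : (0,∞) → ℂ functions, and suppose the potential V(x) = Σ_{k=1}^∞ c_k e^{−iφ_k x} γ_k(x) is real-valued. Assume: (i) sup_k Var(γ_k,(0,∞)) < ∞; (ii) ∫_0^∞ (sup_k |γ_k(x)|)^p dx < ∞; (iii) Σ_{k=1}^∞ |c_k| < ∞; (iv) for every j = 1,…,p−1, Σ_{k_1,…,k_j=1}^∞ |c_{k_1} ⋯ c_{k_j} h_j(η; φ_{k_1},…,φ_{k_j})| < ∞; (v) (nonresonance) Kη ≠ ε_1 φ_{k_1} + ⋯ + ε_J φ_{k_J} for all integers 1 ≤ K ≤ J ≤ p, all indices k_1,…,k_J ≥ 1 and all signs ε_i ∈ {+1,−1}; (vi) the representation is closed under complex conjugation, i.e. there is an involution k ↦ k* of the index set with c_{k*} = conj(c_k), φ_{k*} = −φ_k and γ_{k*} = conj(γ_k). Then every solution of −u'' + V u = (η²/4)·u on (0,∞) is bounded. -/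

import Mathlib

open scoped BigOperators ENNReal
open MeasureTheory

/-- The functions `h_J` of `1+J` real variables (the extra variables in the `ℕ → ℝ`
argument beyond the first `J` are ignored), defined recursively by `h_0(η) = 1` and
`h_J(η;φ_1,…,φ_J) = (η - φ_1 - ⋯ - φ_J)⁻¹ Σ_{j=0}^{J-1} h_j(η;φ_1,…,φ_j) h_{J-j-1}(η;φ_{j+1},…,φ_{J-1})`. -/
noncomputable def hFun : ℕ → ℝ → (ℕ → ℝ) → ℝ
  | 0, _, _ => 1
  | (J+1), η, φ =>
      (η - ∑ i ∈ Finset.range (J+1), φ i)⁻¹ *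
        ∑ j ∈ (Finset.range (J+1)).attach,
          hFun j.1 η φ * hFun (J - j.1) η (fun i => φ (i + j.1))
  termination_by J _ _ => J
  decreasing_by
  · exact Nat.lt_of_lt_of_le (Finset.mem_range.mp j.2) (Nat.le_refl _)
  · exact Nat.lt_succ_of_le (Nat.sub_le J j.1)

/-- Pad a tuple `m : Fin J → ℕ` of indices into a function `ℕ → ℝ` listing `φ_{m_1},…,φ_{m_J}`. -/
noncomputable def padFin (J : ℕ) (φ : ℕ → ℝ) (m : Fin J → ℕ) : ℕ → ℝ :=
  fun n => if h : n < J then φ (m ⟨n, h⟩) else 0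

/-- `u` (with derivative `u'`) is a solution of `-u'' + V u = E u` on `(0,∞)`. -/
def IsWeakSolution (V : ℝ → ℝ) (E : ℝ) (u u' : ℝ → ℂ) : Prop :=
  (∀ x ∈ Set.Ioi (0:ℝ), HasDerivAt u (u' x) x) ∧
  ∀ a b : ℝ, 0 < a → a ≤ b →
    IntervalIntegrable (fun x => (V x : ℂ) * u x - (E : ℂ) * u x) volume a b ∧
    u' b - u' a = ∫ x in a..b, ((V x : ℂ) * u x - (E : ℂ) * u x)

/-- A `C¹` function on a compact interval is absolutely continuous. -/
lemma absolutelyContinuousOnInterval_of_hasDerivAt {f f' : ℝ → ℝ} {s t : ℝ} (hst : s ≤ t)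
    (hf : ∀ x ∈ Set.Icc s t, HasDerivAt f (f' x) x) (hf' : ContinuousOn f' (Set.Icc s t)) :
    AbsolutelyContinuousOnInterval f s t := by
  obtain ⟨C, hC⟩ := isCompact_Icc.exists_bound_of_continuousOn hf'
  have hL : LipschitzOnWith (Real.toNNReal C) f (Set.uIcc s t) := by
    rw [Set.uIcc_of_le hst]
    refine (convex_Icc s t).lipschitzOnWith_of_nnnorm_hasDerivWithin_le
      (fun x hx => (hf x hx).hasDerivWithinAt) (fun x hx => ?_)
    rw [← NNReal.coe_le_coe, coe_nnnorm]
    exact (hC x hx).trans (Real.le_coe_toNNReal C)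
  exact hL.absolutelyContinuousOnInterval

/-- The pointwise estimate for the derivative of the quadratic energy. -/
lemma abs_energy_deriv_le {u y b e₁ e₂ κ β : ℝ} (hβ : 0 < β) (hb : β ≤ b)
    (h₁ : |e₁| ≤ κ) (h₂ : |e₂| ≤ κ) :
    |-2 * e₁ * u * y / b - e₂ * y ^ 2 / b ^ 2 + e₂ * u ^ 2| ≤
      2 / β * κ * (y ^ 2 / b + b * u ^ 2) := by
  have hb0 : 0 < b := hβ.trans_le hb
  have hκ : 0 ≤ κ := (abs_nonneg _).trans h₁
  have key : |-2 * e₁ * u * y / b - e₂ * y ^ 2 / b ^ 2 + e₂ * u ^ 2| ≤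
      2 / b * κ * (y ^ 2 / b + b * u ^ 2) := by
    have e : -2 * e₁ * u * y / b - e₂ * y ^ 2 / b ^ 2 + e₂ * u ^ 2
        = (-2 * e₁ * (u * y) + e₂ * (b * u ^ 2 - y ^ 2 / b)) / b := by
      field_simp
      ring
    rw [e, abs_div, abs_of_pos hb0, div_mul_eq_mul_div, div_mul_eq_mul_div]
    gcongr
    have hq : 0 ≤ y ^ 2 / b := by positivity
    have hq' : 0 ≤ b * u ^ 2 := by positivity
    have a1 : |u * y| * 2 ≤ y ^ 2 / b + b * u ^ 2 := by
      have : 0 ≤ (|y| - b * |u|) ^ 2 / b := by positivity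
      have e2 : (|y| - b * |u|) ^ 2 / b = y ^ 2 / b + b * u ^ 2 - |u * y| * 2 := by
        rw [abs_mul]
        field_simp
        nlinarith [sq_abs y, sq_abs u]
      linarith
    have a2 : |b * u ^ 2 - y ^ 2 / b| ≤ y ^ 2 / b + b * u ^ 2 := by
      rw [abs_le]; constructor <;> linarith
    calc |-2 * e₁ * (u * y) + e₂ * (b * u ^ 2 - y ^ 2 / b)|
        ≤ |-2 * e₁ * (u * y)| + |e₂ * (b * u ^ 2 - y ^ 2 / b)| := abs_add_le _ _
      _ = |e₁| * (|u * y| * 2) + |e₂| * |b * u ^ 2 - y ^ 2 / b| := by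
          simp only [abs_mul, abs_neg, abs_two]; ring
      _ ≤ κ * (y ^ 2 / b + b * u ^ 2) + κ * (y ^ 2 / b + b * u ^ 2) := by gcongr
      _ = 2 * κ * (y ^ 2 / b + b * u ^ 2) := by ring
  refine key.trans ?_
  have : 0 ≤ y ^ 2 / b + b * u ^ 2 := by positivity
  gcongr

/-- A continuous nonnegative function whose increments are controlled by half its supremum is
comparable with each of its values. -/
lemma le_two_mul_of_sub_le_integral {G κ : ℝ → ℝ} {s t : ℝ}
    (hG : ContinuousOn G (Set.Icc s t)) (hG0 : ∀ x ∈ Set.Icc s t, 0 ≤ G x)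
    (hκ : IntervalIntegrable κ volume s t) (hκ0 : ∀ x ∈ Set.Icc s t, 0 ≤ κ x)
    (hsmall : ∫ x in s..t, κ x ≤ 1 / 2)
    (hinc : ∀ x ∈ Set.Icc s t, ∀ y ∈ Set.Icc s t, x ≤ y →
      |G y - G x| ≤ ∫ z in x..y, κ z * G z) :
    ∀ x ∈ Set.Icc s t, ∀ y ∈ Set.Icc s t, G x ≤ 2 * G y := by
  intro x hx y hy
  have hst : s ≤ t := hx.1.trans hx.2
  obtain ⟨m, hm, hmax⟩ := isCompact_Icc.exists_isMaxOn ⟨x, hx⟩ hG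
  have bound : ∀ a ∈ Set.Icc s t, ∀ c ∈ Set.Icc s t, a ≤ c → |G c - G a| ≤ 1 / 2 * G m := by
    intro a ha c hc hac
    have hsub : Set.uIcc a c ⊆ Set.uIcc s t := by
      rw [Set.uIcc_of_le hac, Set.uIcc_of_le hst]; exact Set.Icc_subset_Icc ha.1 hc.2
    have hκ' : IntervalIntegrable κ volume a c := hκ.mono_set hsub
    have hI : Set.Icc a c ⊆ Set.Icc s t := Set.Icc_subset_Icc ha.1 hc.2
    have hGc : ContinuousOn G (Set.uIcc a c) := by
      rw [Set.uIcc_of_le hac]; exact hG.mono hI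
    calc |G c - G a| ≤ ∫ z in a..c, κ z * G z := hinc a ha c hc hac
      _ ≤ ∫ z in a..c, κ z * G m := by
          refine intervalIntegral.integral_mono_on hac (hκ'.mul_continuousOn hGc)
            (hκ'.mul_const _) (fun z hz => ?_)
          exact mul_le_mul_of_nonneg_left (hmax (hI hz)) (hκ0 z (hI hz))
      _ = (∫ z in a..c, κ z) * G m := by simp
      _ ≤ (∫ z in s..t, κ z) * G m := by
          refine mul_le_mul_of_nonneg_right ?_ (hG0 m hm)
          refine intervalIntegral.integral_mono_interval ha.1 hac hc.2 ?_ hκ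
          filter_upwards [ae_restrict_mem measurableSet_Ioc] with z hz
          exact hκ0 z ⟨hz.1.le, hz.2⟩
      _ ≤ 1 / 2 * G m := mul_le_mul_of_nonneg_right hsmall (hG0 m hm)
  have h1 : |G m - G y| ≤ 1 / 2 * G m := by
    rcases le_total y m with h | h
    · exact bound y hy m hm h
    · rw [abs_sub_comm]; exact bound m hm y hy h
  have h2 : G x ≤ G m := hmax hx
  linarith [le_abs_self (G m - G y)]

lemma energy_le_real {f g F a a' b b' κ : ℝ → ℝ} {s t β : ℝ} (hst : s ≤ t)
    (hf : ∀ x ∈ Set.Icc s t, HasDerivAt f (g x) x)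
    (hg : AbsolutelyContinuousOnInterval g s t)
    (hg' : ∀ᵐ x, x ∈ Set.Icc s t → HasDerivAt g (F x * f x) x)
    (ha : ∀ x ∈ Set.Icc s t, HasDerivAt a (a' x) x) (ha' : ContinuousOn a' (Set.Icc s t))
    (hb : ∀ x ∈ Set.Icc s t, HasDerivAt b (b' x) x) (hb' : ContinuousOn b' (Set.Icc s t))
    (hβ : 0 < β) (hbβ : ∀ x ∈ Set.Icc s t, β ≤ b x)
    (h₁ : ∀ x ∈ Set.Icc s t, |a' x + a x ^ 2 - b x ^ 2 - F x| ≤ κ x)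
    (h₂ : ∀ x ∈ Set.Icc s t, |b' x + 2 * a x * b x| ≤ κ x)
    (hκ : IntervalIntegrable κ volume s t) (hsmall : ∫ x in s..t, κ x ≤ β / 4) :
    ∀ x ∈ Set.Icc s t, ∀ y ∈ Set.Icc s t,
      (g x - a x * f x) ^ 2 / b x + b x * f x ^ 2 ≤
        2 * ((g y - a y * f y) ^ 2 / b y + b y * f y ^ 2) := by
  have hbpos : ∀ x ∈ Set.Icc s t, 0 < b x := fun x hx => hβ.trans_le (hbβ x hx)
  have huIcc : Set.uIcc s t = Set.Icc s t := Set.uIcc_of_le hst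
  have hgc : ContinuousOn g (Set.Icc s t) := huIcc ▸ hg.continuousOn
  have cont : ∀ {h h' : ℝ → ℝ}, (∀ x ∈ Set.Icc s t, HasDerivAt h (h' x) x) →
      ContinuousOn h (Set.Icc s t) := fun H x hx => (H x hx).continuousAt.continuousWithinAt
  have hfA := absolutelyContinuousOnInterval_of_hasDerivAt hst hf hgc
  have haA := absolutelyContinuousOnInterval_of_hasDerivAt hst ha ha'
  have hbA := absolutelyContinuousOnInterval_of_hasDerivAt hst hb hb'
  have hiA : AbsolutelyContinuousOnInterval (fun x => (b x)⁻¹) s t := by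
    refine absolutelyContinuousOnInterval_of_hasDerivAt hst
      (fun x hx => (hb x hx).fun_inv (hbpos x hx).ne') ?_
    exact hb'.neg.div ((cont hb).pow 2) (fun x hx => (pow_pos (hbpos x hx) 2).ne')
  set G : ℝ → ℝ := fun x => (g x - a x * f x) ^ 2 / b x + b x * f x ^ 2 with hGdef
  have hGA : AbsolutelyContinuousOnInterval G s t := by
    have h1 := hg.sub (haA.mul hfA)
    have h2 := ((h1.mul h1).mul hiA).add (hbA.mul (hfA.mul hfA))
    have e : G = (g - a * f) * (g - a * f) * (fun x => (b x)⁻¹) + b * (f * f) := by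
      funext x
      simp only [hGdef, Pi.add_apply, Pi.mul_apply, Pi.sub_apply]
      ring
    rwa [e]
  have hG' : ∀ᵐ x, x ∈ Set.Icc s t → |deriv G x| ≤ 2 / β * κ x * G x := by
    filter_upwards [hg'] with x hx hxI
    have hb0 := hbpos x hxI
    have d1 := (hx hxI).sub ((ha x hxI).mul (hf x hxI))
    have d2 := ((d1.pow 2).div (hb x hxI) hb0.ne').add ((hb x hxI).mul ((hf x hxI).pow 2))
    have d3 : HasDerivAt G _ x := d2
    rw [d3.deriv]
    have := abs_energy_deriv_le (u := f x) (y := g x - a x * f x) hβ (hbβ x hxI)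
      (h₁ x hxI) (h₂ x hxI)
    refine le_of_eq_of_le (congrArg abs ?_) this
    simp only [Pi.sub_apply, Pi.mul_apply, Pi.pow_apply]
    field_simp
    ring
  have hκ0 : ∀ x ∈ Set.Icc s t, 0 ≤ κ x := fun x hx => (abs_nonneg _).trans (h₁ x hx)
  refine le_two_mul_of_sub_le_integral (G := G) (κ := fun x => 2 / β * κ x)
    (huIcc ▸ hGA.continuousOn) ?_ (hκ.const_mul _) ?_ ?_ ?_
  · intro x hx
    have := hbpos x hx
    simp only [hGdef]
    positivity
  · intro x hx
    have := hκ0 x hx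
    positivity
  · rw [intervalIntegral.integral_const_mul]
    calc 2 / β * ∫ x in s..t, κ x ≤ 2 / β * (β / 4) := by gcongr
      _ = 1 / 2 := by field_simp; norm_num
  · intro x hx y hy hxy
    have hI : Set.Icc x y ⊆ Set.Icc s t := Set.Icc_subset_Icc hx.1 hy.2
    have hIu : Set.uIcc x y ⊆ Set.uIcc s t := by
      rw [Set.uIcc_of_le hxy, huIcc]; exact hI
    have hGxy := hGA.mono hIu
    rw [← hGxy.integral_deriv_eq_sub, ← Real.norm_eq_abs]
    refine intervalIntegral.norm_integral_le_of_norm_le hxy ?_ ?_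
    · filter_upwards [hG'] with z hz hzI
      exact hz (hI ⟨hzI.1.le, hzI.2⟩)
    · exact ((hκ.mono_set hIu).const_mul _).mul_continuousOn hGxy.continuousOn

lemma IsWeakSolution.energy_le {V : ℝ → ℝ} {E : ℝ} {u u' : ℝ → ℂ} (hu : IsWeakSolution V E u u')
    {w w' : ℝ → ℂ} {κ : ℝ → ℝ} {s t β : ℝ} (hs : 0 < s) (hst : s ≤ t)
    (hw : ∀ x ∈ Set.Icc s t, HasDerivAt w (w' x) x) (hw' : ContinuousOn w' (Set.Icc s t))
    (hβ : 0 < β) (hwβ : ∀ x ∈ Set.Icc s t, β ≤ (w x).im)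
    (herr : ∀ x ∈ Set.Icc s t, ‖w' x + w x ^ 2 - ((V x - E : ℝ) : ℂ)‖ ≤ κ x)
    (hκ : IntervalIntegrable κ volume s t) (hsmall : ∫ x in s..t, κ x ≤ β / 4) :
    ∀ x ∈ Set.Icc s t, ∀ y ∈ Set.Icc s t,
      β * ‖u x‖ ^ 2 ≤ 2 * (‖u' y - (w y).re * u y‖ ^ 2 / (w y).im + (w y).im * ‖u y‖ ^ 2) := by
  have hpos : ∀ x ∈ Set.Icc s t, 0 < x := fun x hx => hs.trans_le hx.1
  have huIcc : Set.uIcc s t = Set.Icc s t := Set.uIcc_of_le hst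
  have hintegr := (hu.2 s t hs hst).1
  set H : ℝ → ℂ := fun x => (V x : ℂ) * u x - (E : ℂ) * u x with hH
  have hrepr : ∀ x ∈ Set.Icc s t, u' x = u' s + ∫ z in s..x, H z := by
    intro x hx
    rw [← (hu.2 s x hs hx.1).2]; ring
  -- real-linear coordinate functionals
  have main : ∀ L : ℂ →L[ℝ] ℝ, ∀ x ∈ Set.Icc s t, ∀ y ∈ Set.Icc s t,
      (L (u' x) - (w x).re * L (u x)) ^ 2 / (w x).im + (w x).im * L (u x) ^ 2 ≤
        2 * ((L (u' y) - (w y).re * L (u y)) ^ 2 / (w y).im + (w y).im * L (u y) ^ 2) := by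
    intro L
    have hLint : IntervalIntegrable (fun z => L (H z)) volume s t :=
      ⟨L.integrable_comp hintegr.1, L.integrable_comp hintegr.2⟩
    have hLrepr : ∀ x ∈ Set.Icc s t, L (u' x) = L (u' s) + ∫ z in s..x, L (H z) := by
      intro x hx
      rw [hrepr x hx, map_add, L.intervalIntegral_comp_comm]
      refine hintegr.mono_set ?_
      rw [Set.uIcc_of_le hx.1, huIcc]
      exact Set.Icc_subset_Icc le_rfl hx.2
    have hP := hLint.absolutelyContinuousOnInterval_intervalIntegral (c := s) Set.left_mem_uIcc
    refine energy_le_real (f := fun x => L (u x)) (g := fun x => L (u' x)) (F := fun x => V x - E)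
      (a := fun x => (w x).re) (b := fun x => (w x).im) (a' := fun x => (w' x).re)
      (b' := fun x => (w' x).im) (κ := κ) hst ?_ ?_ ?_ ?_ ?_ ?_ ?_ hβ hwβ ?_ ?_ hκ hsmall
    · intro x hx
      exact L.hasFDerivAt.comp_hasDerivAt x (hu.1 x (hpos x hx))
    · rw [absolutelyContinuousOnInterval_iff] at hP ⊢
      intro ε hε
      obtain ⟨δ, hδ, h⟩ := hP ε hε
      refine ⟨δ, hδ, fun E' hE' hlen => ?_⟩
      have := h E' hE' hlen
      refine lt_of_eq_of_lt (Finset.sum_congr rfl fun i hi => ?_) this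
      have hmem := hE'.1 i hi
      rw [huIcc] at hmem
      rw [hLrepr _ hmem.1, hLrepr _ hmem.2, dist_add_left]
    · have hae := hLint.ae_hasDerivAt_integral
      have h1 : ∀ᵐ x : ℝ, x ≠ s := by simp [ae_iff, measure_singleton]
      have h2 : ∀ᵐ x : ℝ, x ≠ t := by simp [ae_iff, measure_singleton]
      filter_upwards [hae, h1, h2] with x hx hxs hxt hxI
      have hd := hx (huIcc ▸ hxI) s Set.left_mem_uIcc
      have hLH : L (H x) = (V x - E) * L (u x) := by
        have : H x = (V x - E : ℝ) • u x := by
          simp only [hH, Complex.real_smul, Complex.ofReal_sub]; ring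
        rw [this, map_smul, smul_eq_mul]
      rw [hLH] at hd
      refine (hd.const_add (L (u' s))).congr_of_eventuallyEq ?_
      filter_upwards [Icc_mem_nhds (lt_of_le_of_ne hxI.1 (Ne.symm hxs))
        (lt_of_le_of_ne hxI.2 hxt)] with z hz
      exact hLrepr z hz
    · intro x hx
      exact Complex.reCLM.hasFDerivAt.comp_hasDerivAt x (hw x hx)
    · exact Complex.continuous_re.comp_continuousOn hw'
    · intro x hx
      exact Complex.imCLM.hasFDerivAt.comp_hasDerivAt x (hw x hx)
    · exact Complex.continuous_im.comp_continuousOn hw'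
    · intro x hx
      have h := (Complex.abs_re_le_norm _).trans (herr x hx)
      have e : (w' x + w x ^ 2 - ((V x - E : ℝ) : ℂ)).re =
          (w' x).re + (w x).re ^ 2 - (w x).im ^ 2 - (V x - E) := by
        simp only [Complex.add_re, Complex.sub_re, Complex.ofReal_re, pow_two, Complex.mul_re]
        ring
      rwa [e] at h
    · intro x hx
      have h := (Complex.abs_im_le_norm _).trans (herr x hx)
      have e : (w' x + w x ^ 2 - ((V x - E : ℝ) : ℂ)).im =
          (w' x).im + 2 * (w x).re * (w x).im := by
        simp only [Complex.add_im, Complex.sub_im, Complex.ofReal_im, pow_two, Complex.mul_im]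
        ring
      rwa [e] at h
  intro x hx y hy
  have hr := main Complex.reCLM x hx y hy
  have hi := main Complex.imCLM x hx y hy
  have hsq : ∀ z : ℂ, ‖z‖ ^ 2 = z.re ^ 2 + z.im ^ 2 := fun z => by
    rw [← Complex.normSq_eq_norm_sq, Complex.normSq_apply]; ring
  simp only [Complex.reCLM_apply, Complex.imCLM_apply] at hr hi
  have hx0 : 0 < (w x).im := hβ.trans_le (hwβ x hx)
  have q1 : 0 ≤ ((u' x).re - (w x).re * (u x).re) ^ 2 / (w x).im := by positivity
  have q2 : 0 ≤ ((u' x).im - (w x).re * (u x).im) ^ 2 / (w x).im := by positivity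
  have q3 : β * ((u x).re ^ 2 + (u x).im ^ 2) ≤ (w x).im * ((u x).re ^ 2 + (u x).im ^ 2) := by
    have := hwβ x hx
    gcongr
  have e : ‖u' y - (w y).re * u y‖ ^ 2 / (w y).im + (w y).im * ‖u y‖ ^ 2
      = (((u' y).re - (w y).re * (u y).re) ^ 2 / (w y).im + (w y).im * (u y).re ^ 2)
        + (((u' y).im - (w y).re * (u y).im) ^ 2 / (w y).im + (w y).im * (u y).im ^ 2) := by
    rw [hsq, hsq]
    simp
    ring
  rw [e, hsq]
  nlinarith

lemma measurable_of_eVariationOn_ne_top {f : ℝ → ℂ} (hf : eVariationOn f Set.univ ≠ ⊤) :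
    Measurable f := by
  have hreal : ∀ g : ℝ → ℝ, LocallyBoundedVariationOn g Set.univ → Measurable g := by
    intro g hg
    obtain ⟨p, q, hp, hq, rfl⟩ := hg.exists_monotoneOn_sub_monotoneOn
    exact (monotoneOn_univ.1 hp).measurable.sub (monotoneOn_univ.1 hq).measurable
  have hb : LocallyBoundedVariationOn f Set.univ :=
    BoundedVariationOn.locallyBoundedVariationOn hf
  have hre := hreal _ (Complex.reCLM.lipschitz.comp_locallyBoundedVariationOn hb)
  have him := hreal _ (Complex.imCLM.lipschitz.comp_locallyBoundedVariationOn hb)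
  exact measurable_of_re_im hre him

lemma norm_sub_average_le {f : ℝ → ℂ} {x K : ℝ} (c : ℂ)
    (hf : IntervalIntegrable f volume x (x + 1))
    (h : ∀ t ∈ Set.Icc x (x + 1), ‖c - f t‖ ≤ K) : ‖c - ∫ t in x..x + 1, f t‖ ≤ K := by
  have e : c - ∫ t in x..x + 1, f t = ∫ t in x..x + 1, (c - f t) := by
    rw [intervalIntegral.integral_sub intervalIntegrable_const hf]; simp
  rw [e]
  refine (intervalIntegral.norm_integral_le_of_norm_le_const (C := K) fun t ht => ?_).trans ?_
  · rw [Set.uIoc_of_le (by linarith)] at ht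
    exact h t ⟨ht.1.le, ht.2⟩
  · simp

/-- The increments of length two of a monotone function of total increase at most `W` are
integrable, with integral at most `2 * W`. -/
lemma integrableOn_increment {v : ℝ → ℝ} {W : ℝ} (hv : Monotone v)
    (hW : ∀ x y, x ≤ y → v y - v x ≤ W) :
    IntegrableOn (fun x => v (x + 2) - v x) (Set.Ioi 1) ∧
      ∫ x in Set.Ioi (1 : ℝ), (v (x + 2) - v x) ≤ 2 * W := by
  have hvi : ∀ a b, IntervalIntegrable v volume a b := fun a b => hv.intervalIntegrable
  have hvi' : ∀ a b, IntervalIntegrable (fun x => v (x + 2)) volume a b := fun a b =>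
    Monotone.intervalIntegrable (fun x y h => hv (by linarith))
  have hki : ∀ a b, IntervalIntegrable (fun x => v (x + 2) - v x) volume a b := fun a b =>
    (hvi' a b).sub (hvi a b)
  have hpos : ∀ x, 0 ≤ v (x + 2) - v x := fun x => sub_nonneg.2 (hv (by linarith))
  have hbound : ∀ T : ℝ, 1 ≤ T → ∫ x in (1 : ℝ)..T, (v (x + 2) - v x) ≤ 2 * W := by
    intro T hT
    rw [intervalIntegral.integral_sub (hvi' _ _) (hvi _ _),
      intervalIntegral.integral_comp_add_right (fun x => v x)]
    have e1 := intervalIntegral.integral_add_adjacent_intervals (hvi (1 + 2) T) (hvi T (T + 2))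
    have e2 := intervalIntegral.integral_add_adjacent_intervals (hvi 1 (1 + 2)) (hvi (1 + 2) T)
    have b1 : ∫ x in T..T + 2, v x ≤ ∫ x in T..T + 2, v (T + 2) :=
      intervalIntegral.integral_mono_on (by linarith) (hvi _ _) intervalIntegrable_const
        (fun x hx => hv hx.2)
    have b2 : ∫ x in (1 : ℝ)..1 + 2, v 1 ≤ ∫ x in (1 : ℝ)..1 + 2, v x :=
      intervalIntegral.integral_mono_on (by linarith) intervalIntegrable_const (hvi _ _)
        (fun x hx => hv hx.1)
    simp only [intervalIntegral.integral_const, add_sub_cancel_left, smul_eq_mul] at b1 b2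
    have := hW 1 (T + 2) (by linarith)
    linarith
  have hintegr : IntegrableOn (fun x => v (x + 2) - v x) (Set.Ioi 1) := by
    refine integrableOn_Ioi_of_intervalIntegral_norm_bounded (l := Filter.atTop)
      (b := fun T : ℝ => T) (2 * W) 1 (fun T => (hki 1 T).1) Filter.tendsto_id ?_
    filter_upwards [Filter.eventually_ge_atTop 1] with T hT
    simpa only [Real.norm_of_nonneg (hpos _)] using hbound T hT
  refine ⟨hintegr, ?_⟩
  refine le_of_tendsto (intervalIntegral_tendsto_integral_Ioi 1 hintegr Filter.tendsto_id) ?_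
  filter_upwards [Filter.eventually_ge_atTop 1] with T hT
  exact hbound T hT

/-- A function of bounded variation on the line is within `L¹`-distance controlled by its variation
of a `C¹` function whose derivative has `L¹`-norm controlled by the variation. -/
lemma exists_smoothing {f : ℝ → ℂ} {W M : ℝ} (hf : eVariationOn f Set.univ ≤ ENNReal.ofReal W)
    (hW : 0 ≤ W) (hM : ∀ x, ‖f x‖ ≤ M) :
    ∃ g g' : ℝ → ℂ, ∃ κ : ℝ → ℝ, (∀ x, HasDerivAt g (g' x) x) ∧ Continuous g' ∧
      (∀ x, ‖g x‖ ≤ M) ∧ (∀ x, ‖g' x‖ ≤ κ x) ∧ (∀ x, ‖f x - g x‖ ≤ κ x) ∧ (∀ x, κ x ≤ W) ∧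
      IntegrableOn κ (Set.Ioi 1) ∧ ∫ x in Set.Ioi (1 : ℝ), κ x ≤ 2 * W := by
  have hfin : eVariationOn f Set.univ ≠ ⊤ := (hf.trans_lt ENNReal.ofReal_lt_top).ne
  have hloc : LocallyBoundedVariationOn f Set.univ :=
    BoundedVariationOn.locallyBoundedVariationOn hfin
  have hmeas := measurable_of_eVariationOn_ne_top hfin
  set v : ℝ → ℝ := fun x => variationOnFromTo f Set.univ 0 x with hvdef
  have hv : Monotone v :=
    monotoneOn_univ.1 (variationOnFromTo.monotoneOn hloc (Set.mem_univ 0))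
  have hvsub : ∀ x y, x ≤ y → v y - v x = (eVariationOn f (Set.univ ∩ Set.Icc x y)).toReal := by
    intro x y hxy
    have := variationOnFromTo.add hloc (Set.mem_univ 0) (Set.mem_univ x) (Set.mem_univ y)
    rw [← variationOnFromTo.eq_of_le f Set.univ hxy]
    simp only [hvdef]; linarith
  have hvW : ∀ x y, x ≤ y → v y - v x ≤ W := by
    intro x y hxy
    rw [hvsub x y hxy]
    refine ENNReal.toReal_le_of_le_ofReal hW ?_
    exact (eVariationOn.mono f (Set.subset_univ _)).trans hf
  have hvf : ∀ x y, x ≤ y → ‖f y - f x‖ ≤ v y - v x := by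
    intro x y hxy
    rw [hvsub x y hxy, ← dist_eq_norm]
    refine BoundedVariationOn.dist_le ?_ ⟨Set.mem_univ _, hxy, le_rfl⟩ ⟨Set.mem_univ _, le_rfl, hxy⟩
    exact (BoundedVariationOn.mono hfin (Set.subset_univ _))
  have hvf' : ∀ a b x y, a ≤ x → a ≤ y → x ≤ b → y ≤ b → ‖f x - f y‖ ≤ v b - v a := by
    intro a b x y h1 h2 h3 h4
    rcases le_total x y with h | h
    · rw [norm_sub_rev]
      exact (hvf x y h).trans (sub_le_sub (hv h4) (hv h1))
    · exact (hvf y x h).trans (sub_le_sub (hv h3) (hv h2))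
  have hfi : ∀ a b, IntervalIntegrable f volume a b := by
    intro a b
    rw [intervalIntegrable_iff]
    exact Measure.integrableOn_of_bounded (M := M) (by simp) hmeas.aestronglyMeasurable
      (Filter.Eventually.of_forall hM)
  set S : ℝ → ℂ := fun x => ∫ t in x..x + 1, f t with hS
  have hScont : Continuous S := by
    have hP := intervalIntegral.continuous_primitive hfi 0
    have e : S = fun x => (∫ t in (0 : ℝ)..x + 1, f t) - ∫ t in (0 : ℝ)..x, f t := by
      funext x
      rw [intervalIntegral.integral_interval_sub_left (hfi _ _) (hfi _ _)]
    rw [e]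
    exact (hP.comp (continuous_id.add continuous_const)).sub hP
  have hSi : ∀ a b, IntervalIntegrable S volume a b := fun a b => hScont.intervalIntegrable a b
  refine ⟨fun x => ∫ t in x..x + 1, S t, fun x => S (x + 1) - S x, fun x => v (x + 2) - v x,
    ?_, ?_, ?_, ?_, ?_, ?_, integrableOn_increment hv hvW⟩
  · intro x
    have e : (fun x => ∫ t in x..x + 1, S t) =
        fun x => (∫ t in (0 : ℝ)..x + 1, S t) - ∫ t in (0 : ℝ)..x, S t := by
      funext x
      rw [intervalIntegral.integral_interval_sub_left (hSi _ _) (hSi _ _)]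
    rw [e]
    have hd : ∀ y, HasDerivAt (fun x => ∫ t in (0 : ℝ)..x, S t) (S y) y := fun y =>
      hScont.integral_hasStrictDerivAt 0 y |>.hasDerivAt
    exact ((hd (x + 1)).comp_add_const x 1).sub (hd x)
  · exact (hScont.comp (continuous_id.add continuous_const)).sub hScont
  · have hSM : ∀ x, ‖S x‖ ≤ M := fun x => by
      simpa using norm_sub_average_le 0 (hfi x (x + 1)) (fun t _ => by simpa using hM t)
    intro x
    simpa using norm_sub_average_le 0 (hSi x (x + 1)) (fun t _ => by simpa using hSM t)
  · intro x
    refine norm_sub_average_le _ (hfi x (x + 1)) fun t ht => ?_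
    rw [norm_sub_rev]
    refine norm_sub_average_le _ (hfi (x + 1) (x + 1 + 1)) fun r hr => ?_
    refine hvf' x (x + 2) t r ht.1 (by linarith [hr.1]) (by linarith [ht.2]) (by linarith [hr.2])
  · intro x
    refine norm_sub_average_le _ (hSi x (x + 1)) fun t ht => ?_
    refine norm_sub_average_le _ (hfi t (t + 1)) fun r hr => ?_
    refine hvf' x (x + 2) x r le_rfl (by linarith [hr.1, ht.1]) (by linarith)
      (by linarith [hr.2, ht.2])
  · intro x
    exact hvW x (x + 2) (by linarith)

lemma integrable_tsum_of_norm_le {α ι E : Type*} [MeasurableSpace α] {μ : Measure α} [Countable ι]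
    [NormedAddCommGroup E] {F : ι → α → E} {a : ι → ℝ} {B : ι → α → ℝ} {D : ℝ}
    (hF : ∀ i, AEStronglyMeasurable (F i) μ) (hpt : ∀ x, Summable fun i => F i x)
    (ha : Summable a) (ha0 : ∀ i, 0 ≤ a i) (hB : ∀ i, Integrable (B i) μ)
    (hBD : ∀ i, ∫ x, B i x ∂μ ≤ D) (hle : ∀ i x, ‖F i x‖ ≤ a i * B i x) :
    Integrable (fun x => ∑' i, F i x) μ := by
  have hFi : ∀ i, Integrable (F i) μ := fun i =>
    ((hB i).const_mul (a i)).mono' (hF i) (Filter.Eventually.of_forall (hle i))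
  refine ⟨?_, ?_⟩
  · refine aestronglyMeasurable_of_tendsto_ae (Filter.atTop : Filter (Finset ι))
      (f := fun s x => ∑ i ∈ s, F i x) (fun s => ?_)
      (Filter.Eventually.of_forall fun x => (hpt x).hasSum)
    exact Finset.aestronglyMeasurable_fun_sum s fun i _ => hF i
  · have h1 : ∀ i, ∫⁻ x, ‖F i x‖ₑ ∂μ ≤ ENNReal.ofReal (a i * D) := by
      intro i
      rw [← ofReal_integral_norm_eq_lintegral_enorm (hFi i)]
      refine ENNReal.ofReal_le_ofReal ?_
      calc ∫ x, ‖F i x‖ ∂μ ≤ ∫ x, a i * B i x ∂μ :=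
            integral_mono (hFi i).norm ((hB i).const_mul _) (hle i)
        _ = a i * ∫ x, B i x ∂μ := integral_const_mul _ _
        _ ≤ a i * D := mul_le_mul_of_nonneg_left (hBD i) (ha0 i)
    calc ∫⁻ x, ‖∑' i, F i x‖ₑ ∂μ ≤ ∫⁻ x, ∑' i, ‖F i x‖ₑ ∂μ := by
          refine lintegral_mono fun x => ?_
          exact enorm_tsum_le_tsum_enorm
      _ = ∑' i, ∫⁻ x, ‖F i x‖ₑ ∂μ := lintegral_tsum fun i => (hF i).enorm
      _ ≤ ∑' i, ENNReal.ofReal (a i * D) := ENNReal.tsum_le_tsum h1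
      _ < ⊤ := (ha.mul_right D).tsum_ofReal_lt_top

lemma prod_le_mul_sum_pow {J p : ℕ} (hp : 1 ≤ p) (hpJ : p ≤ J) {M : ℝ} {a : Fin J → ℝ}
    (h0 : ∀ i, 0 ≤ a i) (hM : ∀ i, a i ≤ M) :
    ∏ i, a i ≤ M ^ (J - p) * ∑ i, a i ^ p := by
  have : Nonempty (Fin J) := ⟨⟨0, by omega⟩⟩
  obtain ⟨k, -, hk⟩ := Finset.exists_max_image Finset.univ a Finset.univ_nonempty
  calc ∏ i, a i ≤ ∏ _i : Fin J, a k :=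
        Finset.prod_le_prod (fun i _ => h0 i) fun i hi => hk i hi
    _ = a k ^ (J - p) * a k ^ p := by
        rw [Finset.prod_const, Finset.card_univ, Fintype.card_fin, ← pow_add,
          Nat.sub_add_cancel hpJ]
    _ ≤ M ^ (J - p) * ∑ i, a i ^ p := by
        have h1 := h0 k
        have h2 : a k ^ p ≤ ∑ i, a i ^ p :=
          Finset.single_le_sum (f := fun i => a i ^ p) (fun i _ => pow_nonneg (h0 i) p)
            (Finset.mem_univ k)
        have h3 := hM k
        have h4 : 0 ≤ M := h1.trans h3
        gcongr

/-- A family of `C¹` functions, uniformly bounded with their derivatives, whose derivatives are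
uniformly `L¹` and whose members are uniformly `Lᵖ` on `(1,∞)`. -/
structure IsControlledFamily (p : ℕ) (M D : ℝ) (g g' : ℕ → ℝ → ℂ) : Prop where
  hasDerivAt : ∀ k x, HasDerivAt (g k) (g' k x) x
  continuous_deriv : ∀ k, Continuous (g' k)
  norm_le : ∀ k x, ‖g k x‖ ≤ M
  norm_deriv_le : ∀ k x, ‖g' k x‖ ≤ M
  integrable_deriv : ∀ k, IntegrableOn (g' k) (Set.Ioi 1)
  integral_deriv_le : ∀ k, ∫ x in Set.Ioi (1 : ℝ), ‖g' k x‖ ≤ D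
  integrable_pow : ∀ k, IntegrableOn (fun x => ‖g k x‖ ^ p) (Set.Ioi 1)
  integral_pow_le : ∀ k, ∫ x in Set.Ioi (1 : ℝ), ‖g k x‖ ^ p ≤ D

/-- The monomial `e^{-i(φ_{m_1}+⋯+φ_{m_J})x} g_{m_1}(x)⋯g_{m_J}(x)`. -/
noncomputable def oscTerm (φ : ℕ → ℝ) (g : ℕ → ℝ → ℂ) (J : ℕ) (m : Fin J → ℕ) (x : ℝ) : ℂ :=
  Complex.exp (-Complex.I * ((∑ i, φ (m i) : ℝ) : ℂ) * x) * ∏ i, g (m i) x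

/-- The part of the derivative of `oscTerm` in which the amplitude is differentiated. -/
noncomputable def oscTermDeriv (φ : ℕ → ℝ) (g g' : ℕ → ℝ → ℂ) (J : ℕ) (m : Fin J → ℕ) (x : ℝ) :
    ℂ :=
  Complex.exp (-Complex.I * ((∑ i, φ (m i) : ℝ) : ℂ) * x) *
    ∑ i, (∏ j ∈ Finset.univ.erase i, g (m j) x) * g' (m i) x

/-- The `J`-homogeneous series with coefficients `A`. -/
noncomputable def oscSum (φ : ℕ → ℝ) (g : ℕ → ℝ → ℂ) (J : ℕ) (A : (Fin J → ℕ) → ℂ) (x : ℝ) : ℂ :=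
  ∑' m, A m * oscTerm φ g J m x

/-- The series obtained from `oscSum` by differentiating the amplitudes only. -/
noncomputable def oscSumDeriv (φ : ℕ → ℝ) (g g' : ℕ → ℝ → ℂ) (J : ℕ) (A : (Fin J → ℕ) → ℂ)
    (x : ℝ) : ℂ :=
  ∑' m, A m * oscTermDeriv φ g g' J m x

lemma norm_exp_neg_I_mul (a x : ℝ) : ‖Complex.exp (-Complex.I * (a : ℂ) * x)‖ = 1 := by
  have : -Complex.I * (a : ℂ) * x = ((-(a * x) : ℝ) : ℂ) * Complex.I := by push_cast; ring
  rw [this, Complex.norm_exp_ofReal_mul_I]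

lemma norm_oscTerm (φ : ℕ → ℝ) (g : ℕ → ℝ → ℂ) (J : ℕ) (m : Fin J → ℕ) (x : ℝ) :
    ‖oscTerm φ g J m x‖ = ∏ i, ‖g (m i) x‖ := by
  rw [oscTerm, norm_mul, norm_exp_neg_I_mul, one_mul, norm_prod]

lemma oscSum_zero (φ : ℕ → ℝ) (g : ℕ → ℝ → ℂ) (A : (Fin 0 → ℕ) → ℂ) (x : ℝ) :
    oscSum φ g 0 A x = A Fin.elim0 := by
  rw [oscSum, tsum_eq_single Fin.elim0 (fun m hm => absurd (Subsingleton.elim _ _) hm)]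
  simp [oscTerm]

lemma oscSum_finset_sum {φ : ℕ → ℝ} {g : ℕ → ℝ → ℂ} {ι : Type*} (s : Finset ι) {J : ℕ}
    {A : ι → (Fin J → ℕ) → ℂ} {x : ℝ}
    (hA : ∀ i ∈ s, Summable fun m => A i m * oscTerm φ g J m x) :
    oscSum φ g J (fun m => ∑ i ∈ s, A i m) x = ∑ i ∈ s, oscSum φ g J (A i) x := by
  simp only [oscSum, Finset.sum_mul]
  exact Summable.tsum_finsetSum hA

namespace IsControlledFamily

variable {p : ℕ} {M D : ℝ} {g g' : ℕ → ℝ → ℂ} {φ : ℕ → ℝ} {J : ℕ} {A : (Fin J → ℕ) → ℂ}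

lemma bound_nonneg (h : IsControlledFamily p M D g g') : 0 ≤ M :=
  (norm_nonneg _).trans (h.norm_le 0 0)

lemma continuous (h : IsControlledFamily p M D g g') (k : ℕ) : Continuous (g k) :=
  continuous_iff_continuousAt.2 fun x => (h.hasDerivAt k x).continuousAt

lemma tendsto_zero (h : IsControlledFamily p M D g g') (hp : 1 ≤ p) (k : ℕ) :
    Filter.Tendsto (g k) Filter.atTop (nhds 0) := by
  have hpow : Filter.Tendsto (fun x => g k x ^ p) Filter.atTop (nhds 0) := by
    refine tendsto_zero_of_hasDerivAt_of_integrableOn_Ioi (a := 1)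
      (fun x _ => (h.hasDerivAt k x).fun_pow p) ?_ ?_
    · refine Integrable.bdd_mul (c := p * M ^ (p - 1)) (h.integrable_deriv k) ?_ ?_
      · exact (continuous_const.mul ((h.continuous k).pow _)).aestronglyMeasurable
      · refine Filter.Eventually.of_forall fun x => ?_
        rw [norm_mul, norm_pow, Complex.norm_natCast]
        have := h.norm_le k x
        gcongr
    · have := h.integrable_pow k
      refine (integrable_norm_iff ?_).1 ?_
      · exact ((h.continuous k).pow _).aestronglyMeasurable
      · simp only [norm_pow]
        exact this
  rw [Metric.tendsto_nhds] at hpow ⊢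
  intro ε hε
  filter_upwards [hpow (ε ^ p) (pow_pos hε p)] with x hx
  rw [dist_zero_right, norm_pow] at hx
  rw [dist_zero_right]
  exact lt_of_pow_lt_pow_left₀ p hε.le hx

lemma norm_oscTerm_le (h : IsControlledFamily p M D g g') (m : Fin J → ℕ) (x : ℝ) :
    ‖oscTerm φ g J m x‖ ≤ M ^ J := by
  rw [norm_oscTerm]
  calc ∏ i, ‖g (m i) x‖ ≤ ∏ _i : Fin J, M :=
        Finset.prod_le_prod (fun _ _ => norm_nonneg _) fun i _ => h.norm_le _ _
    _ = M ^ J := by simp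

lemma norm_mul_oscTerm_le (h : IsControlledFamily p M D g g') (m : Fin J → ℕ) (x : ℝ) :
    ‖A m * oscTerm φ g J m x‖ ≤ ‖A m‖ * M ^ J := by
  rw [norm_mul]
  exact mul_le_mul_of_nonneg_left (h.norm_oscTerm_le m x) (norm_nonneg _)

lemma summable_norm (h : IsControlledFamily p M D g g') (hA : Summable fun m => ‖A m‖) (x : ℝ) :
    Summable fun m => ‖A m * oscTerm φ g J m x‖ :=
  Summable.of_nonneg_of_le (fun _ => norm_nonneg _) (fun m => h.norm_mul_oscTerm_le m x)
    (hA.mul_right _)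

lemma continuous_oscTerm (h : IsControlledFamily p M D g g') (m : Fin J → ℕ) :
    Continuous (oscTerm φ g J m) := by
  unfold oscTerm
  have := h.continuous
  fun_prop

lemma continuous_oscTermDeriv (h : IsControlledFamily p M D g g') (m : Fin J → ℕ) :
    Continuous (oscTermDeriv φ g g' J m) := by
  unfold oscTermDeriv
  have := h.continuous
  have := h.continuous_deriv
  fun_prop

lemma continuous_oscSum (h : IsControlledFamily p M D g g') (hA : Summable fun m => ‖A m‖) :
    Continuous (oscSum φ g J A) :=
  continuous_tsum (fun m => continuous_const.mul (h.continuous_oscTerm m)) (hA.mul_right (M ^ J))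
    fun m x => h.norm_mul_oscTerm_le m x

lemma norm_oscTermDeriv_le (h : IsControlledFamily p M D g g') (m : Fin J → ℕ) (x : ℝ) :
    ‖oscTermDeriv φ g g' J m x‖ ≤ M ^ (J - 1) * ∑ i, ‖g' (m i) x‖ := by
  rw [oscTermDeriv, norm_mul, norm_exp_neg_I_mul, one_mul, Finset.mul_sum]
  refine (norm_sum_le _ _).trans (Finset.sum_le_sum fun i _ => ?_)
  rw [norm_mul, norm_prod]
  refine mul_le_mul_of_nonneg_right ?_ (norm_nonneg _)
  calc ∏ j ∈ Finset.univ.erase i, ‖g (m j) x‖ ≤ ∏ _j ∈ Finset.univ.erase i, M :=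
        Finset.prod_le_prod (fun _ _ => norm_nonneg _) fun i _ => h.norm_le _ _
    _ = M ^ (J - 1) := by simp

lemma norm_oscTermDeriv_le' (h : IsControlledFamily p M D g g') (m : Fin J → ℕ) (x : ℝ) :
    ‖oscTermDeriv φ g g' J m x‖ ≤ M ^ (J - 1) * (J * M) := by
  refine (h.norm_oscTermDeriv_le m x).trans ?_
  have hM := h.bound_nonneg
  have : ∑ i, ‖g' (m i) x‖ ≤ J * M := by
    calc ∑ i, ‖g' (m i) x‖ ≤ ∑ _i : Fin J, M := Finset.sum_le_sum fun i _ => h.norm_deriv_le _ _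
      _ = J * M := by simp
  gcongr

lemma norm_mul_oscTermDeriv_le (h : IsControlledFamily p M D g g') (m : Fin J → ℕ) (x : ℝ) :
    ‖A m * oscTermDeriv φ g g' J m x‖ ≤ ‖A m‖ * (M ^ (J - 1) * (J * M)) := by
  rw [norm_mul]
  exact mul_le_mul_of_nonneg_left (h.norm_oscTermDeriv_le' m x) (norm_nonneg _)

lemma continuous_oscSumDeriv (h : IsControlledFamily p M D g g') (hA : Summable fun m => ‖A m‖) :
    Continuous (oscSumDeriv φ g g' J A) :=
  continuous_tsum (fun m => continuous_const.mul (h.continuous_oscTermDeriv m))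
    (hA.mul_right (M ^ (J - 1) * (J * M))) fun m x => h.norm_mul_oscTermDeriv_le m x

lemma integrable_oscSumDeriv (h : IsControlledFamily p M D g g') (hA : Summable fun m => ‖A m‖) :
    IntegrableOn (oscSumDeriv φ g g' J A) (Set.Ioi 1) := by
  have hM := h.bound_nonneg
  refine integrable_tsum_of_norm_le (a := fun m => ‖A m‖)
    (B := fun m x => M ^ (J - 1) * ∑ i, ‖g' (m i) x‖) (D := M ^ (J - 1) * (J * D))
    (fun m => (continuous_const.mul (h.continuous_oscTermDeriv m)).aestronglyMeasurable)
    (fun x => ?_) hA (fun _ => norm_nonneg _) (fun m => ?_) (fun m => ?_) (fun m x => ?_)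
  · exact Summable.of_norm_bounded (hA.mul_right (M ^ (J - 1) * (J * M)))
      fun m => h.norm_mul_oscTermDeriv_le m x
  · exact (integrable_finsetSum _ fun i _ => (h.integrable_deriv (m i)).norm).const_mul _
  · rw [integral_const_mul, integral_finsetSum _ fun i _ => (h.integrable_deriv (m i)).norm]
    refine mul_le_mul_of_nonneg_left ?_ (pow_nonneg hM _)
    calc _ ≤ ∑ _i : Fin J, D := Finset.sum_le_sum fun i _ => h.integral_deriv_le (m i)
      _ = J * D := by simp
  · rw [norm_mul]
    exact mul_le_mul_of_nonneg_left (h.norm_oscTermDeriv_le m x) (norm_nonneg _)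

lemma integrable_oscSum (h : IsControlledFamily p M D g g') (hp : 1 ≤ p) (hpJ : p ≤ J)
    (hA : Summable fun m => ‖A m‖) :
    IntegrableOn (oscSum φ g J A) (Set.Ioi 1) := by
  have hM := h.bound_nonneg
  refine integrable_tsum_of_norm_le (a := fun m => ‖A m‖)
    (B := fun m x => M ^ (J - p) * ∑ i, ‖g (m i) x‖ ^ p) (D := M ^ (J - p) * (J * D))
    (fun m => (continuous_const.mul (h.continuous_oscTerm m)).aestronglyMeasurable)
    (fun x => (h.summable_norm hA x).of_norm) hA (fun _ => norm_nonneg _) (fun m => ?_)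
    (fun m => ?_) (fun m x => ?_)
  · exact (integrable_finsetSum _ fun i _ => h.integrable_pow (m i)).const_mul _
  · rw [integral_const_mul, integral_finsetSum _ fun i _ => h.integrable_pow (m i)]
    refine mul_le_mul_of_nonneg_left ?_ (pow_nonneg hM _)
    calc _ ≤ ∑ _i : Fin J, D := Finset.sum_le_sum fun i _ => h.integral_pow_le (m i)
      _ = J * D := by simp
  · rw [norm_mul, norm_oscTerm]
    exact mul_le_mul_of_nonneg_left
      (prod_le_mul_sum_pow hp hpJ (fun _ => norm_nonneg _) fun _ => h.norm_le _ _) (norm_nonneg _)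

lemma tendsto_oscSum (h : IsControlledFamily p M D g g') (hp : 1 ≤ p) (hJ : 1 ≤ J)
    (hA : Summable fun m => ‖A m‖) :
    Filter.Tendsto (oscSum φ g J A) Filter.atTop (nhds 0) := by
  have : Filter.Tendsto (fun x => ∑' m, A m * oscTerm φ g J m x) Filter.atTop
      (nhds (∑' _m : Fin J → ℕ, (0 : ℂ))) := by
    refine tendsto_tsum_of_dominated_convergence (bound := fun m => ‖A m‖ * M ^ J)
      (hA.mul_right _) (fun m => ?_)
      (Filter.Eventually.of_forall fun x m => h.norm_mul_oscTerm_le m x)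
    rw [tendsto_zero_iff_norm_tendsto_zero]
    have h1 : Filter.Tendsto (fun x => ‖A m‖ * ∏ i, ‖g (m i) x‖) Filter.atTop
        (nhds (‖A m‖ * ∏ _i : Fin J, 0)) :=
      (tendsto_finsetProd _ fun i _ => (h.tendsto_zero hp (m i)).norm.trans
        (by simp)).const_mul _
    have h2 : ‖A m‖ * ∏ _i : Fin J, (0 : ℝ) = 0 := by
      rw [Finset.prod_const, Finset.card_univ, Fintype.card_fin, zero_pow (by omega), mul_zero]
    rw [h2] at h1
    refine h1.congr fun x => ?_
    rw [norm_mul, norm_oscTerm]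
  rw [tsum_zero] at this
  exact this

lemma hasDerivAt_oscTerm (h : IsControlledFamily p M D g g') (m : Fin J → ℕ) (x : ℝ) :
    HasDerivAt (oscTerm φ g J m)
      (-Complex.I * ((∑ i, φ (m i) : ℝ) : ℂ) * oscTerm φ g J m x +
        oscTermDeriv φ g g' J m x) x := by
  have h1 : HasDerivAt (fun x : ℝ => -Complex.I * ((∑ i, φ (m i) : ℝ) : ℂ) * (x : ℂ))
      (-Complex.I * ((∑ i, φ (m i) : ℝ) : ℂ) * 1) x :=
    (HasDerivAt.ofReal_comp (hasDerivAt_id x)).const_mul _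
  have h2 := HasDerivAt.fun_finsetProd (u := Finset.univ) fun i _ => h.hasDerivAt (m i) x
  refine (h1.cexp.mul h2).congr_deriv ?_
  simp only [oscTerm, oscTermDeriv, smul_eq_mul]
  ring

lemma hasDerivAt_oscSum (h : IsControlledFamily p M D g g') (hA : Summable fun m => ‖A m‖)
    (hA' : Summable fun m => ‖A m * ((∑ i, φ (m i) : ℝ) : ℂ)‖) (x : ℝ) :
    HasDerivAt (oscSum φ g J A)
      (oscSum φ g J (fun m => -Complex.I * (A m * ((∑ i, φ (m i) : ℝ) : ℂ))) x +
        oscSumDeriv φ g g' J A x) x := by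
  have hA'' : Summable fun m => ‖-Complex.I * (A m * ((∑ i, φ (m i) : ℝ) : ℂ))‖ := by
    simpa using hA'
  have key := hasDerivAt_tsum (y₀ := (0 : ℝ))
    (g := fun m x => A m * oscTerm φ g J m x)
    (g' := fun m x => -Complex.I * (A m * ((∑ i, φ (m i) : ℝ) : ℂ)) * oscTerm φ g J m x +
      A m * oscTermDeriv φ g g' J m x)
    (u := fun m => ‖-Complex.I * (A m * ((∑ i, φ (m i) : ℝ) : ℂ))‖ * M ^ J +
      ‖A m‖ * (M ^ (J - 1) * (J * M)))
    ((hA''.mul_right _).add (hA.mul_right _))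
    (fun m y => ((h.hasDerivAt_oscTerm m y).const_mul (A m)).congr_deriv (by ring))
    (fun m y => (norm_add_le _ _).trans
      (add_le_add (h.norm_mul_oscTerm_le
        (A := fun m => -Complex.I * (A m * ((∑ i, φ (m i) : ℝ) : ℂ))) m y)
        (h.norm_mul_oscTermDeriv_le m y)))
    (h.summable_norm hA 0).of_norm x
  refine key.congr_deriv ?_
  refine Summable.tsum_add (h.summable_norm hA'' x).of_norm ?_
  exact Summable.of_norm_bounded (hA.mul_right (M ^ (J - 1) * (J * M)))
      fun m => h.norm_mul_oscTermDeriv_le m x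

end IsControlledFamily

/-- The coefficients of a product of two homogeneous series. -/
def appendCoeff {j n : ℕ} (A : (Fin j → ℕ) → ℂ) (B : (Fin n → ℕ) → ℂ) (m : Fin (j + n) → ℕ) : ℂ :=
  A (fun i => m (Fin.castAdd n i)) * B (fun i => m (Fin.natAdd j i))

lemma summable_appendCoeff {j n : ℕ} {A : (Fin j → ℕ) → ℂ} {B : (Fin n → ℕ) → ℂ}
    (hA : Summable fun m => ‖A m‖) (hB : Summable fun m => ‖B m‖) :
    Summable fun m => ‖appendCoeff A B m‖ := by
  rw [← (Fin.appendEquiv j n).summable_iff]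
  refine (hA.mul_norm hB).congr fun z => ?_
  simp [appendCoeff, Fin.appendEquiv]

lemma IsControlledFamily.oscSum_mul {p : ℕ} {M D : ℝ} {g g' : ℕ → ℝ → ℂ} {φ : ℕ → ℝ}
    (h : IsControlledFamily p M D g g') {j n : ℕ} {A : (Fin j → ℕ) → ℂ} {B : (Fin n → ℕ) → ℂ}
    (hA : Summable fun m => ‖A m‖) (hB : Summable fun m => ‖B m‖) (x : ℝ) :
    oscSum φ g j A x * oscSum φ g n B x = oscSum φ g (j + n) (appendCoeff A B) x := by
  rw [oscSum, oscSum, tsum_mul_tsum_of_summable_norm (h.summable_norm hA x) (h.summable_norm hB x),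
    oscSum, ← (Fin.appendEquiv j n).tsum_eq]
  refine tsum_congr fun z => ?_
  simp only [appendCoeff, oscTerm, Fin.appendEquiv, Equiv.coe_fn_mk, Fin.append_left,
    Fin.append_right, Fin.sum_univ_add, Fin.prod_univ_add, Complex.ofReal_add, mul_add, add_mul,
    Complex.exp_add]
  ring

lemma hFun_succ (J : ℕ) (η : ℝ) (φ : ℕ → ℝ) :
    hFun (J + 1) η φ = (η - ∑ i ∈ Finset.range (J + 1), φ i)⁻¹ *
      ∑ j ∈ Finset.range (J + 1), hFun j η φ * hFun (J - j) η (fun i => φ (i + j)) := by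
  rw [hFun]
  congr 1
  exact Finset.sum_attach (Finset.range (J + 1))
    fun j => hFun j η φ * hFun (J - j) η (fun i => φ (i + j))

lemma hFun_congr {η : ℝ} {J : ℕ} {φ ψ : ℕ → ℝ} (h : ∀ i < J, φ i = ψ i) :
    hFun J η φ = hFun J η ψ := by
  induction J using Nat.strong_induction_on generalizing φ ψ with
  | _ J ih =>
    cases J with
    | zero => rw [hFun, hFun]
    | succ d =>
      rw [hFun_succ, hFun_succ]
      congr 1
      · rw [Finset.sum_congr rfl fun i hi => h i (Finset.mem_range.1 hi)]
      · refine Finset.sum_congr rfl fun j hj => ?_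
        have hj := Finset.mem_range.1 hj
        rw [ih j hj fun i hi => h i (by omega),
          ih (d - j) (by omega) (φ := fun i => φ (i + j)) (ψ := fun i => ψ (i + j))
            fun i hi => h (i + j) (by omega)]

/-- The coefficients `c_{m_1}⋯c_{m_J} h_J(η; φ_{m_1},…,φ_{m_J})`. -/
noncomputable def hCoeff (η : ℝ) (c : ℕ → ℂ) (φ : ℕ → ℝ) (J : ℕ) (m : Fin J → ℕ) : ℂ :=
  (∏ i, c (m i)) * (hFun J η (padFin J φ m) : ℂ)

lemma sum_range_padFin (J : ℕ) (φ : ℕ → ℝ) (m : Fin J → ℕ) :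
    ∑ i ∈ Finset.range J, padFin J φ m i = ∑ i, φ (m i) := by
  rw [Finset.sum_range]
  exact Finset.sum_congr rfl fun i _ => by simp [padFin]

lemma hCoeff_mul_sub {η : ℝ} {c : ℕ → ℂ} {φ : ℕ → ℝ} {d : ℕ} {m : Fin (d + 1) → ℕ}
    (hm : η ≠ ∑ i, φ (m i)) :
    hCoeff η c φ (d + 1) m * ((η : ℂ) - ((∑ i, φ (m i) : ℝ) : ℂ)) =
      ∑ j ∈ Finset.range (d + 1), (∏ i, c (m i)) * ((hFun j η (padFin (d + 1) φ m) *
        hFun (d - j) η (fun i => padFin (d + 1) φ m (i + j)) : ℝ) : ℂ) := by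
  have h0 : ((η : ℂ) - ((∑ i, φ (m i) : ℝ) : ℂ)) ≠ 0 := by
    rw [← Complex.ofReal_sub, Complex.ofReal_ne_zero]
    exact sub_ne_zero.2 hm
  rw [hCoeff, hFun_succ, sum_range_padFin, ← Finset.mul_sum, ← Complex.ofReal_sum,
    Complex.ofReal_mul, Complex.ofReal_inv, Complex.ofReal_sub]
  field_simp

lemma prod_mul_hFun_eq_appendCoeff (η : ℝ) (c : ℕ → ℂ) (φ : ℕ → ℝ) (j n : ℕ)
    (m : Fin (j + n + 1) → ℕ) :
    (∏ i, c (m i)) * ((hFun j η (padFin (j + n + 1) φ m) *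
        hFun n η (fun i => padFin (j + n + 1) φ m (i + j)) : ℝ) : ℂ) =
      appendCoeff (appendCoeff (hCoeff η c φ j) (hCoeff η c φ n)) (fun k => c (k 0)) m := by
  have h1 : hFun j η (padFin (j + n + 1) φ m) =
      hFun j η (padFin j φ fun i => m (Fin.castAdd 1 (Fin.castAdd n i))) := by
    refine hFun_congr fun i hi => ?_
    have : i < j + n + 1 := by omega
    simp only [padFin, hi, this, dif_pos]
    rfl
  have h2 : hFun n η (fun i => padFin (j + n + 1) φ m (i + j)) =
      hFun n η (padFin n φ fun i => m (Fin.castAdd 1 (Fin.natAdd j i))) := by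
    refine hFun_congr fun i hi => ?_
    have : i + j < j + n + 1 := by omega
    simp only [padFin, hi, this, dif_pos]
    congr 2
    ext
    simp [add_comm]
  rw [h1, h2, Fin.prod_univ_add, Fin.prod_univ_add]
  simp only [appendCoeff, hCoeff, Finset.univ_unique, Fin.default_eq_zero, Finset.prod_singleton,
    Complex.ofReal_mul]
  ring

/-- The sum of the products `a j * a n` with `j + n < N`, grouped by degree. -/
lemma sum_range_mul_sum_range {R : Type*} [CommSemiring R] (a : ℕ → R) (N p : ℕ) (hN : N ≤ p) :
    (∑ j ∈ Finset.range p, a j) ^ 2 =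
      (∑ d ∈ Finset.range N, ∑ j ∈ Finset.range (d + 1), a j * a (d - j)) +
        ∑ z ∈ Finset.range p ×ˢ Finset.range p with N ≤ z.1 + z.2, a z.1 * a z.2 := by
  rw [sq, Finset.sum_mul_sum, ← Finset.sum_product',
    ← Finset.sum_filter_add_sum_filter_not _ (fun z : ℕ × ℕ => N ≤ z.1 + z.2), add_comm]
  congr 1
  rw [Finset.sum_sigma']
  refine Finset.sum_nbij' (fun z => ⟨z.1 + z.2, z.1⟩) (fun y => (y.2, y.1 - y.2)) ?_ ?_ ?_ ?_ ?_
  · rintro ⟨j, n⟩ h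
    simp only [Finset.mem_filter, Finset.mem_product, Finset.mem_range, Finset.mem_sigma] at h ⊢
    omega
  · rintro ⟨d, j⟩ h
    simp only [Finset.mem_filter, Finset.mem_product, Finset.mem_range, Finset.mem_sigma] at h ⊢
    omega
  · rintro ⟨j, n⟩ h
    simp
  · rintro ⟨d, j⟩ h
    simp only [Finset.mem_range, Finset.mem_sigma] at h
    have : j + (d - j) = d := by omega
    simp [this]
  · rintro ⟨j, n⟩ h
    simp

namespace IsControlledFamily

variable {p : ℕ} {M D η : ℝ} {g g' : ℕ → ℝ → ℂ} {φ : ℕ → ℝ} {c : ℕ → ℂ}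

lemma summable_coeff_one (hc : Summable fun k => ‖c k‖) :
    Summable fun m : Fin 1 → ℕ => ‖c (m 0)‖ :=
  ((Equiv.funUnique (Fin 1) ℕ).summable_iff (f := fun k => ‖c k‖)).2 hc

lemma oscSum_hCoeff_mul (h : IsControlledFamily p M D g g') (hc : Summable fun k => ‖c k‖)
    {j n : ℕ} (hj : Summable fun m => ‖hCoeff η c φ j m‖)
    (hn : Summable fun m => ‖hCoeff η c φ n m‖) (x : ℝ) :
    oscSum φ g j (hCoeff η c φ j) x * oscSum φ g n (hCoeff η c φ n) x *
        oscSum φ g 1 (fun m => c (m 0)) x =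
      oscSum φ g (j + n + 1) (appendCoeff (appendCoeff (hCoeff η c φ j) (hCoeff η c φ n))
        fun m => c (m 0)) x := by
  rw [h.oscSum_mul hj hn, h.oscSum_mul (summable_appendCoeff hj hn) (summable_coeff_one hc)]

lemma hasDerivAt_oscSum_hCoeff (h : IsControlledFamily p M D g g')
    (hc : Summable fun k => ‖c k‖) {d : ℕ}
    (hA : ∀ j ≤ d + 1, Summable fun m => ‖hCoeff η c φ j m‖)
    (hres : ∀ m : Fin (d + 1) → ℕ, η ≠ ∑ i, φ (m i)) (x : ℝ) :
    HasDerivAt (oscSum φ g (d + 1) (hCoeff η c φ (d + 1)))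
      (-Complex.I * η * oscSum φ g (d + 1) (hCoeff η c φ (d + 1)) x +
        Complex.I * oscSum φ g 1 (fun m => c (m 0)) x * ∑ j ∈ Finset.range (d + 1),
          oscSum φ g j (hCoeff η c φ j) x * oscSum φ g (d - j) (hCoeff η c φ (d - j)) x +
        oscSumDeriv φ g g' (d + 1) (hCoeff η c φ (d + 1)) x) x := by
  set P : ℕ → (Fin (d + 1) → ℕ) → ℂ := fun j m =>
    (∏ i, c (m i)) * ((hFun j η (padFin (d + 1) φ m) *
        hFun (d - j) η (fun i => padFin (d + 1) φ m (i + j)) : ℝ) : ℂ) with hP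
  have hPj : ∀ j ∈ Finset.range (d + 1), (Summable fun m => ‖P j m‖) ∧
      oscSum φ g (d + 1) (P j) x = oscSum φ g j (hCoeff η c φ j) x *
        oscSum φ g (d - j) (hCoeff η c φ (d - j)) x * oscSum φ g 1 (fun m => c (m 0)) x := by
    intro j hj
    obtain ⟨n, rfl⟩ := Nat.exists_eq_add_of_le (Nat.lt_succ_iff.1 (Finset.mem_range.1 hj))
    have hPe : P j = appendCoeff (appendCoeff (hCoeff η c φ j) (hCoeff η c φ n))
        fun m => c (m 0) := by
      funext m
      rw [hP, ← prod_mul_hFun_eq_appendCoeff]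
      simp only [Nat.add_sub_cancel_left]
    have hj' := hA j (by omega)
    have hn' := hA n (by omega)
    rw [hPe, Nat.add_sub_cancel_left, h.oscSum_hCoeff_mul hc hj' hn']
    exact ⟨summable_appendCoeff (summable_appendCoeff hj' hn') (summable_coeff_one hc), rfl⟩
  have hAd := hA (d + 1) le_rfl
  have hcoef : ∀ m : Fin (d + 1) → ℕ,
      hCoeff η c φ (d + 1) m * ((∑ i, φ (m i) : ℝ) : ℂ) =
        η * hCoeff η c φ (d + 1) m - ∑ j ∈ Finset.range (d + 1), P j m := by
    intro m
    rw [hP, ← hCoeff_mul_sub (hres m)]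
    ring
  have hPsum : Summable fun m => ‖∑ j ∈ Finset.range (d + 1), P j m‖ := by
    refine Summable.of_nonneg_of_le (fun _ => norm_nonneg _) (fun m => norm_sum_le _ _)
      (summable_sum fun j hj => (hPj j hj).1)
  have hA' : Summable fun m =>
      ‖hCoeff η c φ (d + 1) m * ((∑ i, φ (m i) : ℝ) : ℂ)‖ := by
    refine Summable.of_nonneg_of_le (fun _ => norm_nonneg _) (fun m => ?_)
      ((hAd.mul_left ‖(η : ℂ)‖).add hPsum)
    rw [hcoef, ← norm_mul]
    exact norm_sub_le _ _
  refine (h.hasDerivAt_oscSum hAd hA' x).congr_deriv ?_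
  congr 1
  have hsplit : oscSum φ g (d + 1) (fun m => -Complex.I *
        (hCoeff η c φ (d + 1) m * ((∑ i, φ (m i) : ℝ) : ℂ))) x =
      -Complex.I * η * oscSum φ g (d + 1) (hCoeff η c φ (d + 1)) x +
        Complex.I * oscSum φ g (d + 1) (fun m => ∑ j ∈ Finset.range (d + 1), P j m) x := by
    simp only [oscSum]
    rw [← tsum_mul_left, ← tsum_mul_left, ← Summable.tsum_add]
    · refine tsum_congr fun m => ?_
      rw [hcoef]
      ring
    · exact (h.summable_norm hAd x).of_norm.mul_left _
    · exact (h.summable_norm hPsum x).of_norm.mul_left _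
  rw [hsplit, oscSum_finset_sum _ fun j hj => (h.summable_norm (hPj j hj).1 x).of_norm,
    Finset.sum_congr rfl fun j hj => (hPj j hj).2, ← Finset.sum_mul]
  ring

/-- An approximate solution of the Riccati equation `w' + w² = V - η²/4` with `L¹` error. -/
lemma exists_riccati (h : IsControlledFamily p M D g g') (hp : 1 ≤ p) (hη : 0 < η)
    (hc : Summable fun k => ‖c k‖)
    (hA : ∀ j < p, Summable fun m => ‖hCoeff η c φ j m‖)
    (hres : ∀ d, d + 1 < p → ∀ m : Fin (d + 1) → ℕ, η ≠ ∑ i, φ (m i)) :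
    ∃ (w w' : ℝ → ℂ) (κ : ℝ → ℝ) (X : ℝ), 1 ≤ X ∧ IntegrableOn κ (Set.Ioi 1) ∧
      (∀ x, X ≤ x → HasDerivAt w (w' x) x) ∧ ContinuousOn w' (Set.Ici X) ∧
      (∀ x, X ≤ x → η / 4 ≤ (w x).im) ∧
      ∀ x, X ≤ x → ‖w' x + w x ^ 2 -
        (η * oscSum φ g 1 (fun m => c (m 0)) x - (η : ℂ) ^ 2 / 4)‖ ≤ κ x := by
  obtain ⟨N, rfl⟩ := Nat.exists_eq_add_of_le' hp
  set q : ℕ → ℝ → ℂ := fun j => oscSum φ g j (hCoeff η c φ j) with hq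
  set v : ℝ → ℂ := oscSum φ g 1 (fun m => c (m 0)) with hv
  set Q : ℝ → ℂ := fun x => ∑ j ∈ Finset.range (N + 1), q j x with hQ
  set S := (Finset.range (N + 1) ×ˢ Finset.range (N + 1)).filter fun z => N ≤ z.1 + z.2 with hS
  set r : ℝ → ℂ := fun x =>
    ∑ d ∈ Finset.range N, oscSumDeriv φ g g' (d + 1) (hCoeff η c φ (d + 1)) x -
      Complex.I * ∑ z ∈ S, q z.1 x * q z.2 x * v x with hr
  have hq0 : ∀ x, q 0 x = 1 := by
    intro x
    rw [hq]
    simp only [oscSum_zero, hCoeff, hFun]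
    simp
  have hQs : ∀ x, Q x = ∑ d ∈ Finset.range N, q (d + 1) x + 1 := by
    intro x
    simp only [hQ, Finset.sum_range_succ', hq0]
  have hvc : Continuous v := h.continuous_oscSum (summable_coeff_one hc)
  have hqc : ∀ j < N + 1, Continuous (q j) := fun j hj => h.continuous_oscSum (hA j hj)
  have hQc : Continuous Q :=
    continuous_finsetSum _ fun j hj => hqc j (Finset.mem_range.1 hj)
  have hrc : Continuous r := by
    refine (continuous_finsetSum _ fun d hd => ?_).sub
      (continuous_const.mul (continuous_finsetSum _ fun z hz => ?_))
    · exact h.continuous_oscSumDeriv (hA (d + 1) (by have := Finset.mem_range.1 hd; omega))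
    · simp only [hS, Finset.mem_filter, Finset.mem_product, Finset.mem_range] at hz
      exact ((hqc _ hz.1.1).mul (hqc _ hz.1.2)).mul hvc
  have hri : IntegrableOn r (Set.Ioi 1) := by
    refine Integrable.sub (integrable_finsetSum _ fun d hd => ?_)
      ((integrable_finsetSum _ fun z hz => ?_).const_mul _)
    · exact h.integrable_oscSumDeriv (hA (d + 1) (by have := Finset.mem_range.1 hd; omega))
    · simp only [hS, Finset.mem_filter, Finset.mem_product, Finset.mem_range] at hz
      have h1 := hA _ hz.1.1
      have h2 := hA _ hz.1.2
      simp only [hq, hv, h.oscSum_hCoeff_mul hc h1 h2]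
      exact h.integrable_oscSum hp (by omega)
        (summable_appendCoeff (summable_appendCoeff h1 h2) (summable_coeff_one hc))
  have hQlim : Filter.Tendsto Q Filter.atTop (nhds 1) := by
    have h1 : ∀ d ∈ Finset.range N, Filter.Tendsto (q (d + 1)) Filter.atTop (nhds 0) := by
      intro d hd
      exact h.tendsto_oscSum hp (by omega)
        (hA (d + 1) (by have := Finset.mem_range.1 hd; omega))
    have h2 := (tendsto_finsetSum _ h1).add_const 1
    rw [Finset.sum_const_zero, zero_add] at h2
    exact h2.congr fun x => (hQs x).symm
  have hQd : ∀ x, HasDerivAt Q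
      (-Complex.I * η * (Q x - 1) + Complex.I * v x * Q x ^ 2 + r x) x := by
    intro x
    have h1 : HasDerivAt (fun x => ∑ d ∈ Finset.range N, q (d + 1) x + 1)
        (∑ d ∈ Finset.range N, (-Complex.I * η * q (d + 1) x +
          Complex.I * v x * ∑ j ∈ Finset.range (d + 1), q j x * q (d - j) x +
          oscSumDeriv φ g g' (d + 1) (hCoeff η c φ (d + 1)) x)) x := by
      refine (HasDerivAt.fun_sum fun d hd => ?_).add_const _
      have hd := Finset.mem_range.1 hd
      exact h.hasDerivAt_oscSum_hCoeff hc (fun j hj => hA j (by omega)) (hres d (by omega)) x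
    have h2 : Q = fun x => ∑ d ∈ Finset.range N, q (d + 1) x + 1 := funext hQs
    have h3 := sum_range_mul_sum_range (fun j => q j x) N (N + 1) (by omega)
    have h4 : Q x - 1 = ∑ d ∈ Finset.range N, q (d + 1) x := by rw [h2]; ring
    rw [h2]
    refine h1.congr_deriv ?_
    rw [← h2, h4, show Q x ^ 2 = _ from h3]
    simp only [hr, Finset.sum_add_distrib, ← Finset.mul_sum, ← Finset.sum_mul]
    ring
  have hwlim : Filter.Tendsto (fun x => (Complex.I * η / 2 * (2 / Q x - 1)).im) Filter.atTop
      (nhds (η / 2)) := by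
    have h1 : Filter.Tendsto (fun x => Complex.I * η / 2 * (2 / Q x - 1)) Filter.atTop
        (nhds (Complex.I * η / 2 * (2 / 1 - 1))) :=
      ((tendsto_const_nhds.div hQlim one_ne_zero).sub_const 1).const_mul _
    have h2 := (Complex.continuous_im.tendsto _).comp h1
    have h3 : (Complex.I * η / 2 * (2 / 1 - 1)).im = η / 2 := by
      have : Complex.I * η / 2 * (2 / 1 - 1) = ((η / 2 : ℝ) : ℂ) * Complex.I := by
        push_cast; ring
      rw [this]
      simp
    rw [h3] at h2
    exact h2
  have hev := ((hwlim.eventually (eventually_ge_nhds (show η / 4 < η / 2 by linarith))).and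
    (hQlim.norm.eventually (eventually_ge_nhds (show (1 / 2 : ℝ) < ‖(1 : ℂ)‖ by norm_num)))).and
    (Filter.eventually_ge_atTop (1 : ℝ))
  obtain ⟨X, hX⟩ := Filter.eventually_atTop.1 hev
  have hQ0 : ∀ x, X ≤ x → Q x ≠ 0 := by
    intro x hx h0
    have := (hX x hx).1.2
    rw [h0, norm_zero] at this
    norm_num at this
  refine ⟨fun x => Complex.I * η / 2 * (2 / Q x - 1), fun x => -Complex.I * η *
    (-Complex.I * η * (Q x - 1) + Complex.I * v x * Q x ^ 2 + r x) / Q x ^ 2,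
    fun x => 4 * η * ‖r x‖, X, (hX X le_rfl).2, hri.norm.const_mul _, fun x hx => ?_, ?_,
    fun x hx => (hX x hx).1.1, fun x hx => ?_⟩
  · refine ((((hasDerivAt_const x (2 : ℂ)).div (hQd x) (hQ0 x hx)).sub_const 1).const_mul
      (Complex.I * η / 2)).congr_deriv ?_
    ring
  · refine ContinuousOn.div (Continuous.continuousOn (by fun_prop)) (hQc.pow 2).continuousOn
      fun x hx => pow_ne_zero 2 (hQ0 x hx)
  · have h0 := hQ0 x hx
    have h1 : -Complex.I * η *
        (-Complex.I * η * (Q x - 1) + Complex.I * v x * Q x ^ 2 + r x) / Q x ^ 2 +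
        (Complex.I * η / 2 * (2 / Q x - 1)) ^ 2 - (η * v x - (η : ℂ) ^ 2 / 4) =
        -Complex.I * η * r x / Q x ^ 2 := by
      field_simp
      ring_nf
      simp only [Complex.I_sq]
      ring
    have h2 := (hX x hx).1.2
    rw [h1, norm_div, norm_mul, norm_mul, norm_neg, Complex.norm_I, one_mul, norm_pow,
      Complex.norm_real, Real.norm_of_nonneg hη.le]
    rw [div_le_iff₀ (by positivity)]
    have h3 : (1 / 2 : ℝ) ^ 2 ≤ ‖Q x‖ ^ 2 := by gcongr
    nlinarith [mul_nonneg hη.le (norm_nonneg (r x))]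

end IsControlledFamily

lemma exists_norm_le_add_one {p : ℕ} {γ : ℕ → ℝ → ℂ} {W : ℝ}
    (hW : ∀ k, eVariationOn (γ k) (Set.Ioi 0) ≤ ENNReal.ofReal W) (hW0 : 0 ≤ W)
    (hLp : ∫⁻ x in Set.Ioi (0 : ℝ), (⨆ k, (‖γ k x‖₊ : ℝ≥0∞)) ^ p < ⊤) (k : ℕ) {x : ℝ}
    (hx : 0 < x) : ‖γ k x‖ ≤ W + 1 := by
  obtain ⟨y, hy, hy1⟩ : ∃ y : ℝ, 0 < y ∧ ∀ k, ‖γ k y‖ ≤ 1 := by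
    by_contra! hcon
    refine hLp.not_ge ?_
    calc (⊤ : ℝ≥0∞) = ∫⁻ _x in Set.Ioi (0 : ℝ), 1 := by simp
      _ ≤ _ := setLIntegral_mono' measurableSet_Ioi fun y hy => by
        obtain ⟨k, hk⟩ := hcon y hy
        refine one_le_pow₀ (le_iSup_of_le k ?_)
        exact_mod_cast hk.le
  have h1 : ‖γ k x - γ k y‖ ≤ W := by
    have h2 := (eVariationOn.edist_le (γ k) (s := Set.Ioi 0) hx hy).trans (hW k)
    rw [edist_dist, ENNReal.ofReal_le_ofReal_iff hW0, dist_eq_norm] at h2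
    exact h2
  calc ‖γ k x‖ = ‖(γ k x - γ k y) + γ k y‖ := by rw [sub_add_cancel]
    _ ≤ W + 1 := (norm_add_le _ _).trans (add_le_add h1 (hy1 k))

lemma integral_norm_pow_le {p : ℕ} {γ : ℕ → ℝ → ℂ} {f : ℝ → ℂ} {k : ℕ}
    (hf : Measurable f) (hfγ : ∀ x, 1 ≤ x → f x = γ k x)
    (hLp : ∫⁻ x in Set.Ioi (0 : ℝ), (⨆ k, (‖γ k x‖₊ : ℝ≥0∞)) ^ p < ⊤) :
    IntegrableOn (fun x => ‖f x‖ ^ p) (Set.Ioi 1) ∧ ∫ x in Set.Ioi (1 : ℝ), ‖f x‖ ^ p ≤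
      (∫⁻ x in Set.Ioi (0 : ℝ), (⨆ k, (‖γ k x‖₊ : ℝ≥0∞)) ^ p).toReal := by
  have hm : AEStronglyMeasurable (fun x => ‖f x‖ ^ p) (volume.restrict (Set.Ioi 1)) :=
    (hf.norm.pow_const p).aestronglyMeasurable
  have hle : ∫⁻ x in Set.Ioi (1 : ℝ), ‖‖f x‖ ^ p‖ₑ ≤
      ∫⁻ x in Set.Ioi (0 : ℝ), (⨆ k, (‖γ k x‖₊ : ℝ≥0∞)) ^ p := by
    calc ∫⁻ x in Set.Ioi (1 : ℝ), ‖‖f x‖ ^ p‖ₑ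
        ≤ ∫⁻ x in Set.Ioi (1 : ℝ), (⨆ k, (‖γ k x‖₊ : ℝ≥0∞)) ^ p :=
          setLIntegral_mono' measurableSet_Ioi fun x hx => by
            rw [enorm_pow, enorm_norm, hfγ x (le_of_lt hx)]
            exact pow_le_pow_left₀ zero_le (le_iSup (fun k => (‖γ k x‖₊ : ℝ≥0∞)) k) p
      _ ≤ _ := lintegral_mono_set (Set.Ioi_subset_Ioi zero_le_one)
  refine ⟨⟨hm, hle.trans_lt hLp⟩, ?_⟩
  have h0 : ∀ x, ‖‖f x‖ ^ p‖ = ‖f x‖ ^ p := fun x => by simp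
  rw [← integral_congr_ae (Filter.Eventually.of_forall h0), integral_norm_eq_lintegral_enorm hm]
  exact ENNReal.toReal_mono hLp.ne hle

lemma exists_isControlledFamily {p : ℕ} (hp : 1 ≤ p) {γ : ℕ → ℝ → ℂ}
    (hBV : ⨆ k, eVariationOn (γ k) (Set.Ioi 0) < ⊤)
    (hLp : ∫⁻ x in Set.Ioi (0 : ℝ), (⨆ k, (‖γ k x‖₊ : ℝ≥0∞)) ^ p < ⊤) :
    ∃ (M D : ℝ) (g g' : ℕ → ℝ → ℂ) (κ : ℕ → ℝ → ℝ), IsControlledFamily p M D g g' ∧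
      (∀ k x, 0 < x → ‖γ k x‖ ≤ M) ∧ (∀ k x, 1 ≤ x → ‖γ k x - g k x‖ ≤ κ k x) ∧
      (∀ k x, 0 ≤ κ k x) ∧ (∀ k x, κ k x ≤ M) ∧ (∀ k, IntegrableOn (κ k) (Set.Ioi 1)) ∧
      ∀ k, ∫ x in Set.Ioi (1 : ℝ), κ k x ≤ D := by
  set W := (⨆ k, eVariationOn (γ k) (Set.Ioi 0)).toReal with hWdef
  have hW0 : 0 ≤ W := ENNReal.toReal_nonneg
  have hW : ∀ k, eVariationOn (γ k) (Set.Ioi 0) ≤ ENNReal.ofReal W := by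
    intro k
    rw [hWdef, ENNReal.ofReal_toReal hBV.ne]
    exact le_iSup (fun k => eVariationOn (γ k) (Set.Ioi 0)) k
  have hγ : ∀ k x, 0 < x → ‖γ k x‖ ≤ W + 1 := fun k x hx =>
    exists_norm_le_add_one hW hW0 hLp k hx
  set f : ℕ → ℝ → ℂ := fun k x => γ k (max x 1) with hf
  have hpos : ∀ x : ℝ, 0 < max x 1 := fun x => zero_lt_one.trans_le (le_max_right x 1)
  have hfW : ∀ k, eVariationOn (f k) Set.univ ≤ ENNReal.ofReal W := fun k =>
    (eVariationOn.comp_le_of_monotoneOn (γ k) (fun x => max x 1)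
      (fun x _ y _ hxy => max_le_max_right 1 hxy) (fun x _ => hpos x)).trans (hW k)
  have hfγ : ∀ k x, 1 ≤ x → f k x = γ k x := fun k x hx => by simp only [hf, max_eq_left hx]
  choose g g' κ hg hg' hgM hgκ hfg hκW hκi hκI using fun k =>
    exists_smoothing (hfW k) hW0 fun x => hγ k _ (hpos x)
  have hκ0 : ∀ k x, 0 ≤ κ k x := fun k x => (norm_nonneg _).trans (hgκ k x)
  set L := (∫⁻ x in Set.Ioi (0 : ℝ), (⨆ k, (‖γ k x‖₊ : ℝ≥0∞)) ^ p).toReal with hL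
  have hL0 : 0 ≤ L := ENNReal.toReal_nonneg
  have hfL : ∀ k, IntegrableOn (fun x => ‖f k x‖ ^ p) (Set.Ioi 1) ∧
      ∫ x in Set.Ioi (1 : ℝ), ‖f k x‖ ^ p ≤ L := fun k =>
    integral_norm_pow_le (measurable_of_eVariationOn_ne_top
      ((hfW k).trans_lt ENNReal.ofReal_lt_top).ne) (hfγ k) hLp
  have hgc : ∀ k, Continuous (g k) := fun k =>
    continuous_iff_continuousAt.2 fun x => (hg k x).continuousAt
  have hpow : ∀ k x, ‖g k x‖ ^ p ≤ 2 ^ (p - 1) * (‖f k x‖ ^ p + W ^ (p - 1) * κ k x) := by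
    intro k x
    have h1 : ‖g k x‖ ≤ ‖f k x‖ + κ k x := by
      have := norm_sub_norm_le (g k x) (f k x)
      rw [norm_sub_rev] at this
      linarith [hfg k x]
    have h2 : κ k x ^ p ≤ W ^ (p - 1) * κ k x := by
      conv_lhs => rw [← Nat.sub_add_cancel hp, pow_succ]
      exact mul_le_mul_of_nonneg_right (pow_le_pow_left₀ (hκ0 k x) (hκW k x) _) (hκ0 k x)
    calc ‖g k x‖ ^ p ≤ (‖f k x‖ + κ k x) ^ p := pow_le_pow_left₀ (norm_nonneg _) h1 p
      _ ≤ 2 ^ (p - 1) * (‖f k x‖ ^ p + κ k x ^ p) := add_pow_le (norm_nonneg _) (hκ0 k x) p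
      _ ≤ _ := by gcongr
  have hpowi : ∀ k, IntegrableOn
      (fun x => 2 ^ (p - 1) * (‖f k x‖ ^ p + W ^ (p - 1) * κ k x)) (Set.Ioi 1) := fun k =>
    ((hfL k).1.add ((hκi k).const_mul _)).const_mul _
  have hgi : ∀ k, IntegrableOn (fun x => ‖g k x‖ ^ p) (Set.Ioi 1) := fun k =>
    (hpowi k).mono' ((hgc k).norm.pow p).aestronglyMeasurable
      (Filter.Eventually.of_forall fun x => by simpa using hpow k x)
  have hD0 : 0 ≤ 2 ^ (p - 1) * (L + W ^ (p - 1) * (2 * W)) := by positivity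
  refine ⟨W + 1, 2 * W + 2 ^ (p - 1) * (L + W ^ (p - 1) * (2 * W)), g, g', κ,
    ⟨hg, hg', hgM, fun k x => ?_, fun k => ?_, fun k => ?_, hgi, fun k => ?_⟩, hγ,
    fun k x hx => hfγ k x hx ▸ hfg k x, hκ0, fun k x => ?_, hκi, fun k => ?_⟩
  · linarith [hgκ k x, hκW k x]
  · exact (hκi k).mono' (hg' k).aestronglyMeasurable (Filter.Eventually.of_forall (hgκ k))
  · have h1 : ∫ x in Set.Ioi (1 : ℝ), ‖g' k x‖ ≤ ∫ x in Set.Ioi (1 : ℝ), κ k x :=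
      integral_mono_of_nonneg (Filter.Eventually.of_forall fun x => norm_nonneg _) (hκi k)
        (Filter.Eventually.of_forall (hgκ k))
    linarith [hκI k]
  · have h1 : ∫ x in Set.Ioi (1 : ℝ), ‖g k x‖ ^ p ≤
        ∫ x in Set.Ioi (1 : ℝ), 2 ^ (p - 1) * (‖f k x‖ ^ p + W ^ (p - 1) * κ k x) :=
      integral_mono (hgi k) (hpowi k) (hpow k)
    rw [integral_const_mul, integral_add (hfL k).1 ((hκi k).const_mul _), integral_const_mul] at h1
    have h2 : 2 ^ (p - 1) * ((∫ x in Set.Ioi (1 : ℝ), ‖f k x‖ ^ p) +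
        W ^ (p - 1) * ∫ x in Set.Ioi (1 : ℝ), κ k x) ≤
        2 ^ (p - 1) * (L + W ^ (p - 1) * (2 * W)) := by
      have := (hfL k).2
      have := hκI k
      gcongr
    linarith
  · linarith [hκW k x]
  · linarith [hκI k]

lemma oscSum_one (φ : ℕ → ℝ) (g : ℕ → ℝ → ℂ) (a : ℕ → ℂ) (x : ℝ) :
    oscSum φ g 1 (fun m => a (m 0)) x =
      ∑' k, a k * Complex.exp (-Complex.I * (φ k) * x) * g k x := by
  rw [oscSum, ← (Equiv.funUnique (Fin 1) ℕ).symm.tsum_eq]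
  refine tsum_congr fun k => ?_
  simp [oscTerm, mul_assoc]

lemma summable_hCoeff_div {η : ℝ} (hη : 0 < η) {c : ℕ → ℂ} {φ : ℕ → ℝ} {j : ℕ}
    (hsd : 1 ≤ j → Summable fun m : Fin j → ℕ => ‖∏ i, c (m i)‖ * |hFun j η (padFin j φ m)|) :
    Summable fun m => ‖hCoeff η (fun k => c k / η) φ j m‖ := by
  rcases Nat.eq_zero_or_pos j with rfl | hj
  · exact Summable.of_finite
  · refine ((hsd hj).mul_right ((η ^ j)⁻¹)).congr fun m => ?_
    simp only [hCoeff, Finset.prod_div_distrib, Finset.prod_const, Finset.card_univ,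
      Fintype.card_fin, norm_mul, norm_div, norm_pow, Complex.norm_real, Real.norm_eq_abs,
      abs_of_pos hη]
    ring

lemma exists_forall_integral_le {κ : ℝ → ℝ} {X ε : ℝ} (hX : 1 ≤ X)
    (hκ : IntegrableOn κ (Set.Ioi 1)) (hε : 0 < ε) :
    ∃ Y, X ≤ Y ∧ ∀ t, Y ≤ t → IntervalIntegrable κ volume Y t ∧ ∫ x in Y..t, κ x ≤ ε := by
  have hintegr : ∀ a b, 1 ≤ a → a ≤ b → IntervalIntegrable κ volume a b := fun a b ha hab =>
    (intervalIntegrable_iff_integrableOn_Ioc_of_le hab).2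
      (hκ.mono_set fun x hx => ha.trans_lt hx.1)
  have hlim := intervalIntegral_tendsto_integral_Ioi 1 hκ Filter.tendsto_id
  obtain ⟨Z, hZ⟩ := Filter.eventually_atTop.1 (Metric.tendsto_nhds.1 hlim (ε / 2) (half_pos hε))
  refine ⟨max X Z, le_max_left _ _, fun t ht => ?_⟩
  have hY : 1 ≤ max X Z := hX.trans (le_max_left _ _)
  refine ⟨hintegr _ _ hY ht, ?_⟩
  have h1 := hZ _ (le_max_right X Z)
  have h2 := hZ t ((le_max_right X Z).trans ht)
  rw [← intervalIntegral.integral_interval_sub_left (hintegr 1 t le_rfl (hY.trans ht))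
    (hintegr 1 _ le_rfl hY)]
  rw [Real.dist_eq, abs_lt] at h1 h2
  simp only [id] at h1 h2
  linarith

lemma norm_le_sqrt_of_mul_sq_le {z : ℂ} {β C : ℝ} (hβ : 0 < β) (h : β * ‖z‖ ^ 2 ≤ C) :
    ‖z‖ ≤ √(C / β) :=
  Real.le_sqrt_of_sq_le ((le_div_iff₀ hβ).2 (by linarith))

namespace IsWeakSolution

variable {V : ℝ → ℝ} {η K : ℝ} {u u' : ℝ → ℂ}

lemma exists_bound_near_zero (hu : IsWeakSolution V (η ^ 2 / 4) u u') (hη : 0 < η)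
    (hK : ∀ x, 0 < x → |V x| ≤ K) :
    ∃ δ > 0, ∃ C, ∀ x, 0 < x → x ≤ δ → ‖u x‖ ≤ C := by
  have hK0 : 0 ≤ K := (abs_nonneg _).trans (hK 1 one_pos)
  refine ⟨η / (8 * (K + 1)), by positivity, _, fun x hx hxδ => norm_le_sqrt_of_mul_sq_le
    (half_pos hη) (hu.energy_le (w := fun _ => Complex.I * ((η / 2 : ℝ) : ℂ)) (w' := fun _ => 0)
      (κ := fun _ => K) hx hxδ (fun y _ => hasDerivAt_const y _) continuousOn_const (half_pos hη)
      (fun y _ => by simp) (fun y hy => ?_) intervalIntegrable_const ?_ x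
      (Set.left_mem_Icc.2 hxδ) _ (Set.right_mem_Icc.2 hxδ))⟩
  · have h1 : (0 : ℂ) + (Complex.I * ((η / 2 : ℝ) : ℂ)) ^ 2 - ((V y - η ^ 2 / 4 : ℝ) : ℂ) =
        ((-V y : ℝ) : ℂ) := by
      rw [mul_pow, Complex.I_sq]
      push_cast
      ring
    rw [h1, Complex.norm_real, Real.norm_eq_abs, abs_neg]
    exact hK y (hx.trans_le hy.1)
  · rw [intervalIntegral.integral_const, smul_eq_mul]
    calc (η / (8 * (K + 1)) - x) * K ≤ η / (8 * (K + 1)) * (K + 1) := by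
          have : 0 < η / (8 * (K + 1)) := by positivity
          nlinarith
      _ = η / 2 / 4 := by field_simp; norm_num

lemma exists_bound_of_near_zero_of_near_top {E δ Y C₀ C₁ : ℝ} (hu : IsWeakSolution V E u u')
    (hδ : 0 < δ) (h₀ : ∀ x, 0 < x → x ≤ δ → ‖u x‖ ≤ C₀) (h₁ : ∀ x, Y ≤ x → ‖u x‖ ≤ C₁) :
    ∃ C : ℝ, ∀ x ∈ Set.Ioi (0 : ℝ), ‖u x‖ ≤ C := by
  have hcont : ContinuousOn u (Set.Icc δ Y) := fun x hx =>
    (hu.1 x (hδ.trans_le hx.1)).continuousAt.continuousWithinAt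
  obtain ⟨C₂, hC₂⟩ := isCompact_Icc.exists_bound_of_continuousOn hcont
  refine ⟨max C₂ (max C₀ C₁), fun x hx => ?_⟩
  rcases le_total x δ with h | h
  · exact (h₀ x hx h).trans ((le_max_left _ _).trans (le_max_right _ _))
  rcases le_total Y x with h' | h'
  · exact (h₁ x h').trans ((le_max_right _ _).trans (le_max_right _ _))
  · exact (hC₂ x ⟨h, h'⟩).trans (le_max_left _ _)

end IsWeakSolution

theorem stmt2 (p : ℕ) (hp : 2 ≤ p) (η : ℝ) (hη : 0 < η)
    (c : ℕ → ℂ) (φ : ℕ → ℝ) (γ : ℕ → ℝ → ℂ)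
    (V : ℝ → ℝ)
    (hV : ∀ x ∈ Set.Ioi (0:ℝ),
      (V x : ℂ) = ∑' k, c k * Complex.exp (-Complex.I * (φ k) * x) * γ k x)
    -- (i) uniformly bounded variation
    (hBV : ⨆ k, eVariationOn (γ k) (Set.Ioi 0) < ⊤)
    -- (ii) uniform L^p condition
    (hLp : ∫⁻ x in Set.Ioi (0:ℝ), (⨆ k, (‖γ k x‖₊ : ℝ≥0∞)) ^ p < ⊤)
    -- (iii) decay of coefficients
    (hc : Summable fun k => ‖c k‖)
    -- (iv) small divisor conditions
    (hsd : ∀ j : ℕ, 1 ≤ j → j ≤ p - 1 →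
      Summable fun m : Fin j → ℕ => ‖∏ i, c (m i)‖ * |hFun j η (padFin j φ m)|)
    -- (v) nonresonance
    (hres : ∀ K J : ℕ, 1 ≤ K → K ≤ J → J ≤ p → ∀ (m : Fin J → ℕ) (ε : Fin J → ℝ),
      (∀ i, ε i = 1 ∨ ε i = -1) → (K : ℝ) * η ≠ ∑ i, ε i * φ (m i))
    -- (vi) closure under complex conjugation
    (hinv : ∃ star : ℕ → ℕ, Function.Involutive star ∧
      (∀ k, c (star k) = starRingEnd ℂ (c k)) ∧
      (∀ k, φ (star k) = -φ k) ∧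
      (∀ k, ∀ x ∈ Set.Ioi (0:ℝ), γ (star k) x = starRingEnd ℂ (γ k x))) :
    ∀ u u' : ℝ → ℂ, IsWeakSolution V (η ^ 2 / 4) u u' →
      ∃ C : ℝ, ∀ x ∈ Set.Ioi (0:ℝ), ‖u x‖ ≤ C := by
  intro u u' hu
  obtain ⟨M, D, g, g', κ, h, hγM, hγg, hκ0, hκM, hκi, hκI⟩ :=
    exists_isControlledFamily (p := p) (by omega) hBV hLp
  have hηc : (η : ℂ) ≠ 0 := Complex.ofReal_ne_zero.2 hη.ne'
  have hnorm : ∀ (f : ℕ → ℝ → ℂ) k (x : ℝ),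
      ‖c k * Complex.exp (-Complex.I * (φ k) * x) * f k x‖ = ‖c k‖ * ‖f k x‖ := fun f k x => by
    rw [norm_mul, norm_mul, norm_exp_neg_I_mul, mul_one]
  have hsum : ∀ (f : ℕ → ℝ → ℂ) (x : ℝ), (∀ k, ‖f k x‖ ≤ M) →
      Summable fun k => c k * Complex.exp (-Complex.I * (φ k) * x) * f k x := fun f x hf =>
    Summable.of_norm_bounded (hc.mul_right M) fun k => by
      rw [hnorm]
      exact mul_le_mul_of_nonneg_left (hf k) (norm_nonneg _)
  have hVK : ∀ x, 0 < x → |V x| ≤ ∑' k, ‖c k‖ * M := fun x hx => by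
    rw [← Real.norm_eq_abs, ← Complex.norm_real, hV x hx]
    refine tsum_of_norm_bounded (hc.mul_right M).hasSum fun k => ?_
    rw [hnorm]
    exact mul_le_mul_of_nonneg_left (hγM k x hx) (norm_nonneg _)
  obtain ⟨δ, hδ, C₀, hC₀⟩ := hu.exists_bound_near_zero hη hVK
  obtain ⟨w, w', κ', X, hX1, hκ'i, hw, hw', hwβ, herr⟩ := h.exists_riccati (η := η) (φ := φ)
    (c := fun k => c k / η) (by omega) hη
    (by simpa only [norm_div] using hc.div_const ‖(η : ℂ)‖)
    (fun j hj => summable_hCoeff_div hη fun hj1 => hsd j hj1 (by omega))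
    (fun d hd m => by
      simpa using hres 1 (d + 1) le_rfl (by omega) (by omega) m (fun _ => 1) fun _ => Or.inl rfl)
  have hκsum : ∀ x, Summable fun k => ‖c k‖ * κ k x := fun x =>
    Summable.of_nonneg_of_le (fun k => mul_nonneg (norm_nonneg _) (hκ0 k x))
      (fun k => mul_le_mul_of_nonneg_left (hκM k x) (norm_nonneg _)) (hc.mul_right M)
  have hVg : ∀ x, 1 ≤ x → ‖η * oscSum φ g 1 (fun m => c (m 0) / η) x - V x‖ ≤
      ∑' k, ‖c k‖ * κ k x := fun x hx => by
    have h1 : η * oscSum φ g 1 (fun m => c (m 0) / η) x =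
        ∑' k, c k * Complex.exp (-Complex.I * (φ k) * x) * g k x := by
      rw [oscSum_one φ g (fun k => c k / η), ← tsum_mul_left]
      refine tsum_congr fun k => ?_
      field_simp
    have hx0 : 0 < x := zero_lt_one.trans_le hx
    rw [h1, hV x hx0, ← Summable.tsum_sub (hsum g x fun k => h.norm_le k x)
      (hsum γ x fun k => hγM k x hx0)]
    refine tsum_of_norm_bounded (hκsum x).hasSum fun k => ?_
    rw [← mul_sub, hnorm (fun k x => g k x - γ k x), norm_sub_rev]
    exact mul_le_mul_of_nonneg_left (hγg k x hx) (norm_nonneg _)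
  have hκtot : IntegrableOn (fun x => κ' x + ∑' k, ‖c k‖ * κ k x) (Set.Ioi 1) := by
    refine hκ'i.add (integrable_tsum_of_norm_le
      (fun k => ((hκi k).const_mul _).aestronglyMeasurable)
      hκsum hc (fun k => norm_nonneg _) hκi hκI fun k x => ?_)
    rw [norm_mul, norm_norm, Real.norm_of_nonneg (hκ0 k x)]
  have hβ : 0 < η / 4 := by positivity
  obtain ⟨Y, hXY, hY⟩ := exists_forall_integral_le hX1 hκtot (show 0 < η / 4 / 4 by positivity)
  refine hu.exists_bound_of_near_zero_of_near_top hδ hC₀ fun x hx => norm_le_sqrt_of_mul_sq_le hβ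
    (hu.energy_le (w := w) (w' := w') (by linarith) hx (fun z hz => hw z (hXY.trans hz.1))
      (hw'.mono fun z hz => hXY.trans hz.1) hβ (fun z hz => hwβ z (hXY.trans hz.1))
      (fun z hz => ?_) (hY x hx).1 (hY x hx).2 x (Set.right_mem_Icc.2 hx) Y
      (Set.left_mem_Icc.2 hx))
  have hz := hXY.trans hz.1
  have h1 : w' z + w z ^ 2 - ((V z - η ^ 2 / 4 : ℝ) : ℂ) =
      (w' z + w z ^ 2 - (η * oscSum φ g 1 (fun m => c (m 0) / η) z - (η : ℂ) ^ 2 / 4)) +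
        (η * oscSum φ g 1 (fun m => c (m 0) / η) z - V z) := by
    push_cast
    ring
  rw [h1]
  exact (norm_add_le _ _).trans (add_le_add (herr z hz) (hVg z (hX1.trans hz)))
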